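/- There exists a constant C > 0 such that for every real x ≥ 1 and every natural number k with 1 ≤ k ≤ x, the ratio (number of pairs (I, J) ∈ P(x) with N(I ⊔ J) = k) / (number of pairs in P(x)) differs from r(k)/(4·ζ_{ℚ(i)}(2)·k²) by at most C·r(k)/(x^(2/3)·k^(4/3)). -/

import Mathlib

open Real

/-- The absolute norm of an ideal of `ℤ[i]`: the cardinality of the quotient ring. -/
noncomputable def normI (I : Ideal GaussianInt) : ℕ := Nat.card (GaussianInt ⧸ I)

/-- `P x` : pairs of nonzero ideals of `ℤ[i]` with both norms at most `x`. -/
noncomputable def P (x : ℝ) : Set (Ideal GaussianInt × Ideal GaussianInt) :=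
  {p | p.1 ≠ ⊥ ∧ p.2 ≠ ⊥ ∧ (normI p.1 : ℝ) ≤ x ∧ (normI p.2 : ℝ) ≤ x}

/-- `ζ_{ℚ(i)}(2)`, the sum of `1/N(I)²` over nonzero ideals of `ℤ[i]`. -/
noncomputable def zetaQi2 : ℝ := ∑' I : {I : Ideal GaussianInt // I ≠ ⊥}, 1 / (normI I.1 : ℝ) ^ 2

/-- `r n` : the number of pairs `(a, b) ∈ ℤ × ℤ` with `a² + b² = n`. -/
noncomputable def r (n : ℕ) : ℕ := {p : ℤ × ℤ | p.1 ^ 2 + p.2 ^ 2 = (n : ℤ)}.ncard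


noncomputable def gEquiv : GaussianInt ≃ₗ[ℤ] (Fin 2 → ℤ) where
  toFun z := ![z.re, z.im]
  invFun v := ⟨v 0, v 1⟩
  map_add' x y := by ext i; fin_cases i <;> simp
  map_smul' c x := by
    ext i; fin_cases i <;> simp
  left_inv z := by simp
  right_inv v := by ext i; fin_cases i <;> simp

noncomputable def gBasis : Module.Basis (Fin 2) ℤ GaussianInt := Module.Basis.ofEquivFun gEquiv

instance gFree : Module.Free ℤ GaussianInt := Module.Free.of_basis gBasis
instance gFinite : Module.Finite ℤ GaussianInt := Module.Finite.of_basis gBasis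
instance gDed : IsDedekindDomain GaussianInt := inferInstance

lemma normI_eq (I : Ideal GaussianInt) : normI I = Ideal.absNorm I := by
  rw [Ideal.absNorm_apply, Submodule.cardQuot_apply]; rfl

lemma gNorm (z : GaussianInt) : Algebra.norm ℤ z = z.re ^ 2 + z.im ^ 2 := by
  rw [Algebra.norm_eq_matrix_det gBasis, Matrix.det_fin_two]
  simp [Algebra.leftMulMatrix_apply, LinearMap.toMatrix_apply, gBasis, gEquiv]
  ring

lemma normI_span (z : GaussianInt) : (normI (Ideal.span {z}) : ℤ) = z.re ^ 2 + z.im ^ 2 := by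
  rw [normI_eq, Ideal.absNorm_span_singleton, gNorm]
  rw [Int.natCast_natAbs, abs_of_nonneg (by positivity)]

lemma normI_mul (I J : Ideal GaussianInt) : normI (I * J) = normI I * normI J := by
  simp [normI_eq]

lemma normI_pos {I : Ideal GaussianInt} (h : I ≠ ⊥) : 0 < normI I := by
  rw [normI_eq, Nat.pos_iff_ne_zero, Ne, Ideal.absNorm_eq_zero_iff]; exact h

lemma normI_eq_one {I : Ideal GaussianInt} : normI I = 1 ↔ I = ⊤ := by
  rw [normI_eq, Ideal.absNorm_eq_one_iff]

/-- first-quadrant generator map -/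
noncomputable def gen (p : ℤ × ℤ) : Ideal GaussianInt := Ideal.span {(⟨p.1, p.2⟩ : GaussianInt)}

def Qd : Set (ℤ × ℤ) := {p | 0 < p.1 ∧ 0 ≤ p.2}

lemma normI_gen (p : ℤ × ℤ) : (normI (gen p) : ℤ) = p.1 ^ 2 + p.2 ^ 2 := normI_span _

lemma gen_injOn : Set.InjOn gen Qd := by
  rintro ⟨a, b⟩ ⟨ha, hb⟩ ⟨c, d⟩ ⟨hc, hd⟩ h
  simp only at ha hb hc hd
  rw [gen, gen, Ideal.span_singleton_eq_span_singleton] at h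
  obtain ⟨u, hu⟩ := h
  have hn : (u : GaussianInt).norm = 1 := (Zsqrtd.norm_eq_one_iff' (by norm_num) _).2 u.isUnit
  generalize (u : GaussianInt) = w at *
  obtain ⟨s, t⟩ := w
  rw [Zsqrtd.norm_def] at hn
  simp only [Zsqrtd.ext_iff, Zsqrtd.re_mul, Zsqrtd.im_mul] at hu
  obtain ⟨h1, h2⟩ := hu
  simp only at hn
  have hn : s * s + t * t = 1 := by linarith
  have hs : s ≤ 1 := by nlinarith [mul_self_nonneg t]
  have hs' : -1 ≤ s := by nlinarith [mul_self_nonneg t]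
  have ht : t ≤ 1 := by nlinarith [mul_self_nonneg s]
  have ht' : -1 ≤ t := by nlinarith [mul_self_nonneg s]
  have : s = -1 ∨ s = 0 ∨ s = 1 := by omega
  have : t = -1 ∨ t = 0 ∨ t = 1 := by omega
  rcases ‹s = -1 ∨ s = 0 ∨ s = 1› with rfl | rfl | rfl <;>
  rcases ‹t = -1 ∨ t = 0 ∨ t = 1› with rfl | rfl | rfl <;> norm_num at hn <;>
  simp at h1 h2 ⊢ <;> omega

lemma gen_surj {I : Ideal GaussianInt} (h : I ≠ ⊥) : ∃ p ∈ Qd, gen p = I := by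
  obtain ⟨z, hz⟩ := (IsPrincipalIdealRing.principal I).principal
  have hz' : I = Ideal.span {z} := hz
  obtain ⟨a, b⟩ := z
  have hne : ¬ (a = 0 ∧ b = 0) := by
    rintro ⟨rfl, rfl⟩
    apply h; rw [hz']
    simp only [Ideal.span_singleton_eq_bot]; rfl
  have key : ∀ s t c d : ℤ, s * s + t * t = 1 → (a * s - b * t = c) → (a * t + b * s = d) →
      gen (c, d) = I := by
    intro s t c d hst h1 h2
    rw [hz', gen, Ideal.span_singleton_eq_span_singleton]
    have hu : IsUnit (⟨s, t⟩ : GaussianInt) := by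
      rw [← Zsqrtd.norm_eq_one_iff' (by norm_num), Zsqrtd.norm_def]; simp; linarith
    refine Associated.symm ⟨hu.unit, ?_⟩
    ext <;> simp <;> linarith
  rcases lt_trichotomy a 0 with ha | ha | ha <;> rcases lt_trichotomy b 0 with hb | hb | hb
  · exact ⟨(-a, -b), ⟨by simp; omega, by simp; omega⟩, key (-1) 0 _ _ (by norm_num) (by ring) (by ring)⟩
  · exact ⟨(-a, -b), ⟨by simp; omega, by simp; omega⟩, key (-1) 0 _ _ (by norm_num) (by ring) (by ring)⟩
  · exact ⟨(b, -a), ⟨by simp; omega, by simp; omega⟩, key 0 (-1) _ _ (by norm_num) (by ring) (by ring)⟩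
  · exact ⟨(-b, a), ⟨by simp; omega, by simp; omega⟩, key 0 1 _ _ (by norm_num) (by ring) (by ring)⟩
  · exact absurd ⟨ha, hb⟩ hne
  · exact ⟨(b, -a), ⟨by simp; omega, by simp; omega⟩, key 0 (-1) _ _ (by norm_num) (by ring) (by ring)⟩
  · exact ⟨(-b, a), ⟨by simp; omega, by simp; omega⟩, key 0 1 _ _ (by norm_num) (by ring) (by ring)⟩
  · exact ⟨(a, b), ⟨by simp; omega, by simp; omega⟩, key 1 0 _ _ (by norm_num) (by ring) (by ring)⟩
  · exact ⟨(a, b), ⟨by simp; omega, by simp; omega⟩, key 1 0 _ _ (by norm_num) (by ring) (by ring)⟩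

lemma gen_ne_bot {p : ℤ × ℤ} (hp : p ∈ Qd) : gen p ≠ ⊥ := by
  rw [gen, Ne, Ideal.span_singleton_eq_bot]
  intro h
  have := congrArg Zsqrtd.re h
  simp at this
  exact hp.1.ne' this

def idealsNorm (k : ℕ) : Set (Ideal GaussianInt) := {I | I ≠ ⊥ ∧ normI I = k}
def idealsLe (y : ℝ) : Set (Ideal GaussianInt) := {I | I ≠ ⊥ ∧ (normI I : ℝ) ≤ y}
noncomputable def Acount (y : ℝ) : ℕ := (idealsLe y).ncard

lemma idealsNorm_eq (k : ℕ) :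
    idealsNorm k = gen '' {p | p ∈ Qd ∧ p.1 ^ 2 + p.2 ^ 2 = (k : ℤ)} := by
  ext I
  constructor
  · rintro ⟨h, hk⟩
    obtain ⟨p, hp, rfl⟩ := gen_surj h
    exact ⟨p, ⟨hp, by rw [← normI_gen, hk]⟩, rfl⟩
  · rintro ⟨p, ⟨hp, hk⟩, rfl⟩
    exact ⟨gen_ne_bot hp, by rw [← normI_gen] at hk; exact_mod_cast hk⟩

lemma idealsLe_eq (y : ℝ) :
    idealsLe y = gen '' {p | p ∈ Qd ∧ (p.1 : ℝ) ^ 2 + (p.2 : ℝ) ^ 2 ≤ y} := by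
  have e : ∀ p, (normI (gen p) : ℝ) = (p.1 : ℝ) ^ 2 + (p.2 : ℝ) ^ 2 := by
    intro p; exact_mod_cast normI_gen p
  ext I
  constructor
  · rintro ⟨h, hk⟩
    obtain ⟨p, hp, rfl⟩ := gen_surj h
    exact ⟨p, ⟨hp, by rw [← e]; exact hk⟩, rfl⟩
  · rintro ⟨p, ⟨hp, hk⟩, rfl⟩
    exact ⟨gen_ne_bot hp, by rw [e]; exact hk⟩

lemma Acount_eq (y : ℝ) :
    Acount y = {p : ℤ × ℤ | p ∈ Qd ∧ (p.1 : ℝ) ^ 2 + (p.2 : ℝ) ^ 2 ≤ y}.ncard := by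
  rw [Acount, idealsLe_eq, Set.InjOn.ncard_image]
  exact gen_injOn.mono fun p hp => hp.1

lemma finite_disc (y : ℝ) : {p : ℤ × ℤ | (p.1 : ℝ) ^ 2 + (p.2 : ℝ) ^ 2 ≤ y}.Finite := by
  obtain ⟨n, hn⟩ := exists_nat_gt y
  apply (Set.finite_Icc ((-(n:ℤ)), (-(n : ℤ))) ((n : ℤ), (n:ℤ))).subset
  rintro ⟨a, b⟩ h
  simp only [Set.mem_ofPred_eq] at h
  have h : (a : ℝ) ^ 2 + (b:ℝ)^2 < n := h.trans_lt hn
  have h : a ^ 2 + b ^ 2 < n := by exact_mod_cast h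
  simp only [Set.mem_Icc, Prod.mk_le_mk]
  refine ⟨⟨?_, ?_⟩, ?_, ?_⟩ <;> nlinarith

lemma idealsLe_finite (y : ℝ) : (idealsLe y).Finite := by
  rw [idealsLe_eq]
  exact ((finite_disc y).subset fun p hp => hp.2).image _

lemma r_eq {k : ℕ} (hk : 1 ≤ k) : r k = 4 * (idealsNorm k).ncard := by
  rw [idealsNorm_eq, Set.InjOn.ncard_image (gen_injOn.mono fun p hp => hp.1)]
  set S := {p : ℤ × ℤ | p ∈ Qd ∧ p.1 ^ 2 + p.2 ^ 2 = (k : ℤ)} with hS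
  have hfin : S.Finite := by
    refine (finite_disc (k:ℝ)).subset ?_
    rintro p ⟨_, hp⟩
    have : (p.1 : ℝ) ^ 2 + (p.2 : ℝ) ^ 2 = k := by exact_mod_cast hp
    exact this.le
  let ρ : ℤ × ℤ → ℤ × ℤ := fun p => (-p.2, p.1)
  have hρ : Function.Injective ρ := by
    rintro ⟨a, b⟩ ⟨c, d⟩ h
    simp [ρ] at h ⊢; omega
  have hT : {p : ℤ × ℤ | p.1 ^ 2 + p.2 ^ 2 = (k : ℤ)} =
      ((S ∪ ρ '' S) ∪ (ρ '' (ρ '' S) ∪ ρ '' (ρ '' (ρ '' S)))) := by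
    ext ⟨a, b⟩
    simp only [Set.mem_ofPred_eq, Set.mem_union, Set.mem_image, Prod.exists, hS, ρ, Qd, Prod.mk.injEq]
    constructor
    · intro h
      have hne : ¬ (a = 0 ∧ b = 0) := by
        rintro ⟨rfl, rfl⟩; simp at h; omega
      have h1 : (0 < a ∧ 0 ≤ b) ∨ (0 < b ∧ 0 ≤ -a) ∨ (0 < -a ∧ 0 ≤ -b) ∨ (0 < -b ∧ 0 ≤ a) := by omega
      rcases h1 with h1 | h1 | h1 | h1
      · exact Or.inl (Or.inl ⟨h1, h⟩)
      · exact Or.inl (Or.inr ⟨b, -a, ⟨h1, by linarith⟩, by ring, rfl⟩)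
      · exact Or.inr (Or.inl ⟨b, -a, ⟨-a, -b, ⟨h1, by linarith⟩, by ring, rfl⟩, by ring, rfl⟩)
      · exact Or.inr (Or.inr ⟨b, -a, ⟨-a, -b, ⟨-b, a, ⟨h1, by linarith⟩, by ring, rfl⟩, by ring, rfl⟩, by ring, rfl⟩)
    · rintro ((h | ⟨c, d, ⟨_, h⟩, rfl, rfl⟩) | (⟨_, _, ⟨c, d, ⟨_, h⟩, rfl, rfl⟩, rfl, rfl⟩ | ⟨_, _, ⟨_, _, ⟨c, d, ⟨_, h⟩, rfl, rfl⟩, rfl, rfl⟩, rfl, rfl⟩))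
      · exact h.2
      all_goals linarith
  rw [r, hT]
  have d1 : Disjoint S (ρ '' S) := by
    rw [Set.disjoint_left]
    rintro _ ⟨⟨h1, h2⟩, h3⟩ ⟨⟨c, d⟩, ⟨⟨h4, h5⟩, h6⟩, rfl⟩
    simp [ρ] at *; omega
  have d2 : Disjoint (S ∪ ρ '' S) (ρ '' (ρ '' S) ∪ ρ '' (ρ '' (ρ '' S))) := by
    rw [Set.disjoint_left]
    rintro _ (⟨⟨h1, h2⟩, h3⟩ | ⟨⟨a, b⟩, ⟨⟨h1, h2⟩, h3⟩, rfl⟩) (⟨_, ⟨⟨c, d⟩, ⟨⟨h4, h5⟩, h6⟩, rfl⟩, e⟩ | ⟨_, ⟨_, ⟨⟨c, d⟩, ⟨⟨h4, h5⟩, h6⟩, rfl⟩, rfl⟩, e⟩) <;>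
    simp [ρ, Prod.ext_iff] at * <;> omega
  have f1 := hfin.image ρ
  have f2 := f1.image ρ
  have f3 := f2.image ρ
  rw [Set.ncard_union_eq d2 (hfin.union f1) (f2.union f3), Set.ncard_union_eq d1 hfin f1,
    ← Set.image_union, Set.ncard_image_of_injective _ hρ, ← Set.image_union,
    Set.ncard_image_of_injective _ hρ, Set.ncard_image_of_injective _ hρ,
    Set.ncard_union_eq d1 hfin f1, Set.ncard_image_of_injective _ hρ]
  ring

abbrev PrI := {p : Ideal GaussianInt // Prime p}
abbrev NZ := {I : Ideal GaussianInt // I ≠ ⊥}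

noncomputable def DD (S : Finset PrI) : Ideal GaussianInt := ∏ p ∈ S, p.1

lemma DD_ne (S : Finset PrI) : DD S ≠ ⊥ := by
  rw [DD, ← Ideal.zero_eq_bot, Finset.prod_ne_zero_iff]
  exact fun p _ => p.2.ne_zero

lemma dvd_DD (S : Finset PrI) (p : PrI) : p.1 ∣ DD S ↔ p ∈ S := by
  constructor
  · intro h
    rw [DD, Prime.dvd_finsetProd_iff p.2] at h
    obtain ⟨q, hq, hpq⟩ := h
    have := (Prime.dvd_prime_iff_associated p.2 q.2).1 hpq
    rw [associated_iff_eq] at this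
    rwa [Subtype.ext this]
  · exact fun h => Finset.dvd_prod_of_mem (fun p : PrI => p.1) h

lemma DD_inj : Function.Injective DD := by
  intro S T h
  ext p
  rw [← dvd_DD, h, dvd_DD]

lemma DD_dvd_iff (S : Finset PrI) (G : Ideal GaussianInt) : DD S ∣ G ↔ ∀ p ∈ S, p.1 ∣ G := by
  constructor
  · exact fun h p hp => ((dvd_DD S p).2 hp).trans h
  · intro h
    have := Finset.prod_primes_dvd (M₀ := Ideal GaussianInt) G (s := S.map ⟨Subtype.val, Subtype.val_injective⟩)
      (by simp +contextual) (by simpa using h)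
    simpa [DD] using this

lemma normI_le_of_dvd {I J : Ideal GaussianInt} (hJ : J ≠ ⊥) (h : I ∣ J) : normI I ≤ normI J := by
  obtain ⟨K, rfl⟩ := h
  exact Nat.le_of_dvd (normI_pos hJ) (by rw [normI_mul]; exact dvd_mul_right _ _)

open Classical in
lemma mobius_hasSum {G : Ideal GaussianInt} (hG : G ≠ ⊥) :
    HasSum (fun S : Finset PrI => if DD S ∣ G then (-1 : ℝ) ^ S.card else 0)
      (if G = ⊤ then 1 else 0) := by
  have hfin : {p : PrI | p.1 ∣ G}.Finite := by
    apply Set.Finite.of_finite_image (f := Subtype.val) _ Subtype.val_injective.injOn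
    refine (idealsLe_finite (normI G)).subset ?_
    rintro _ ⟨p, hp, rfl⟩
    exact ⟨p.2.ne_zero, by exact_mod_cast normI_le_of_dvd hG hp⟩
  set T := hfin.toFinset with hT
  have hmem : ∀ S : Finset PrI, DD S ∣ G ↔ S ∈ T.powerset := by
    intro S
    rw [DD_dvd_iff, Finset.mem_powerset]
    simp [hT, Finset.subset_iff]
  have h := hasSum_sum_of_ne_finset_zero (L := SummationFilter.unconditional _) (f := fun S : Finset PrI => if DD S ∣ G then (-1 : ℝ) ^ S.card else 0)
    (s := T.powerset) (by
      intro S hS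
      rw [if_neg]; rwa [hmem])
  convert! h using 1
  rw [Finset.sum_congr rfl (g := fun S => (((-1 : ℤ) ^ S.card : ℤ) : ℝ)) (by
    intro S hS
    rw [if_pos ((hmem S).2 hS)]; push_cast; rfl)]
  rw [← Int.cast_sum, Finset.sum_powerset_neg_one_pow_card]
  have : T = ∅ ↔ G = ⊤ := by
    rw [hT, Set.Finite.toFinset_eq_empty]
    constructor
    · intro h
      by_contra hne
      have hu : ¬ IsUnit G := by rwa [Ideal.isUnit_iff]
      obtain ⟨p, hp, hpG⟩ := WfDvdMonoid.exists_irreducible_factor hu hG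
      have : (⟨p, hp.prime⟩ : PrI) ∈ {p : PrI | p.1 ∣ G} := hpG
      rw [h] at this
      exact this
    · rintro rfl
      ext p
      simp only [Set.mem_ofPred_eq, Set.mem_empty_iff_false, iff_false]
      intro h
      rw [← Ideal.one_eq_top] at h
      exact p.2.not_isUnit (isUnit_of_dvd_one h)
  simp only [this]
  split_ifs <;> simp

lemma summable_norm_rpow {s : ℝ} (hs : 1 < s) : Summable fun I : NZ => (normI I.1 : ℝ) ^ (-s) := by
  have h1 : Summable fun n : ℕ => ((n : ℝ) + 1) ^ (-s) := by
    have := (summable_nat_add_iff 1).2 (Real.summable_nat_rpow.2 (by linarith : -s < -1))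
    simpa using this
  have h2 : Summable fun p : ℕ × ℕ => ((p.1 : ℝ) + 1) ^ (-s) * ((p.2 : ℝ) + 1) ^ (-s) :=
    h1.mul_of_nonneg h1 (fun n => by positivity) (fun n => by positivity)
  choose g hg hgI using fun I : NZ => gen_surj I.2
  let φ : NZ → ℕ × ℕ := fun I => (((g I).1 - 1).toNat, (g I).2.toNat)
  have hφ : Function.Injective φ := by
    intro I J h
    have h1 := hg I
    have h2 := hg J
    simp only [Qd, Set.mem_ofPred_eq] at h1 h2
    simp only [φ, Prod.mk.injEq] at h
    have : g I = g J := by ext <;> omega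
    apply Subtype.ext
    rw [← hgI I, ← hgI J, this]
  have h3 := (h2.comp_injective hφ).mul_left ((2:ℝ) ^ s)
  refine Summable.of_nonneg_of_le (fun I => by positivity) (fun I => ?_) h3
  have hq := hg I
  have e : (normI I.1 : ℝ) = ((g I).1 : ℝ) ^ 2 + ((g I).2 : ℝ) ^ 2 := by
    have := normI_gen (g I)
    rw [hgI] at this
    exact_mod_cast this
  simp only [Function.comp, φ]
  have e1 : (((((g I).1 - 1).toNat : ℕ) : ℝ)) + 1 = (g I).1 := by
    have : ((((g I).1 - 1).toNat : ℕ) : ℤ) = (g I).1 - 1 := Int.toNat_of_nonneg (by have := hq.1; omega)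
    have : (((((g I).1 - 1).toNat : ℕ) : ℤ) : ℝ) = (((g I).1 - 1 : ℤ) : ℝ) := by rw [this]
    push_cast at this
    linarith
  have e2 : ((((g I).2.toNat : ℕ) : ℝ)) = (g I).2 := by
    have : (((g I).2.toNat : ℕ) : ℤ) = (g I).2 := Int.toNat_of_nonneg hq.2
    exact_mod_cast this
  rw [e1, e2]
  have ha : (1:ℝ) ≤ (g I).1 := by exact_mod_cast hq.1
  have hb : (0:ℝ) ≤ (g I).2 := by exact_mod_cast hq.2
  rw [← Real.mul_rpow (by positivity) (by positivity)]
  have : (2:ℝ) ^ s = (1/2 : ℝ) ^ (-s) := by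
    rw [Real.rpow_neg (by norm_num), one_div, Real.inv_rpow (by norm_num), inv_inv]
  rw [this, ← Real.mul_rpow (by positivity) (by positivity)]
  apply Real.rpow_le_rpow_of_nonpos (by positivity)
  · rw [e]; nlinarith [sq_nonneg ((g I).1 - (g I).2 : ℝ)]
  · linarith

lemma summable_norm_sq : Summable fun I : NZ => 1 / (normI I.1 : ℝ) ^ 2 := by
  refine (summable_norm_rpow (s := 2) (by norm_num)).congr fun I => ?_
  rw [Real.rpow_neg (by positivity), one_div]
  norm_num

lemma zeta_pos : 0 < zetaQi2 := by
  unfold zetaQi2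
  refine summable_norm_sq.tsum_pos (fun I => by positivity) ⟨⊤, top_ne_bot⟩ ?_
  have := normI_pos (top_ne_bot (α := Ideal GaussianInt))
  positivity

lemma summable_DD {s : ℝ} (hs : 1 < s) : Summable fun S : Finset PrI => (normI (DD S) : ℝ) ^ (-s) :=
  (summable_norm_rpow hs).comp_injective (i := fun S : Finset PrI => (⟨DD S, DD_ne S⟩ : NZ))
    (fun _ _ h => DD_inj (congrArg Subtype.val h))

lemma summable_DD_sq : Summable fun S : Finset PrI => 1 / (normI (DD S) : ℝ) ^ 2 :=
  summable_norm_sq.comp_injective (i := fun S : Finset PrI => (⟨DD S, DD_ne S⟩ : NZ))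
    (fun _ _ h => DD_inj (congrArg Subtype.val h))

open Classical in
lemma mult_hasSum (D : NZ) : HasSum (fun G : NZ => if D.1 ∣ G.1 then 1 / (normI G.1 : ℝ) ^ 2 else 0)
    (1 / (normI D.1 : ℝ) ^ 2 * zetaQi2) := by
  let i : NZ → NZ := fun I => ⟨D.1 * I.1,
    mul_ne_zero (M₀ := Ideal GaussianInt) D.2 I.2⟩
  have hi : Function.Injective i := by
    intro I J h
    have := congrArg Subtype.val h
    exact Subtype.ext (mul_left_cancel₀ (a := D.1) D.2 this)
  rw [← hi.hasSum_iff]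
  · have := summable_norm_sq.hasSum.mul_left (1 / (normI D.1 : ℝ) ^ 2)
    convert! this using 2 with I
    · simp only [Function.comp, i, dvd_mul_right, if_true, normI_mul]
      push_cast
      rw [mul_pow, one_div_mul_one_div]
  · intro G hG
    rw [if_neg]
    rintro ⟨K, hK⟩
    apply hG
    refine ⟨⟨K, ?_⟩, Subtype.ext hK.symm⟩
    rintro rfl
    exact G.2 (by rw [hK]; exact Ideal.mul_bot _)

open Classical in
lemma mobius_zeta : HasSum (fun S : Finset PrI => (-1 : ℝ) ^ S.card * (1 / (normI (DD S) : ℝ) ^ 2))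
    (1 / zetaQi2) := by
  have hs : Summable fun S : Finset PrI => (-1 : ℝ) ^ S.card * (1 / (normI (DD S) : ℝ) ^ 2) := by
    refine Summable.of_norm (summable_DD_sq.congr fun S => ?_)
    rw [norm_mul, norm_pow, norm_neg, norm_one, one_pow, one_mul, Real.norm_of_nonneg (by positivity)]
  let F : Finset PrI → NZ → ℝ := fun S G =>
    (-1 : ℝ) ^ S.card * (if DD S ∣ G.1 then 1 / (normI G.1 : ℝ) ^ 2 else 0)
  have hF1 : ∀ S, HasSum (F S) ((-1 : ℝ) ^ S.card * (1 / (normI (DD S) : ℝ) ^ 2 * zetaQi2)) :=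
    fun S => (mult_hasSum ⟨DD S, DD_ne S⟩).mul_left _
  have hF : Summable (Function.uncurry F) := by
    refine Summable.of_norm ?_
    have hn : ∀ S G, ‖F S G‖ = if DD S ∣ G.1 then 1 / (normI G.1 : ℝ) ^ 2 else 0 := by
      intro S G
      simp only [F]
      rw [norm_mul, norm_pow, norm_neg, norm_one, one_pow, one_mul, Real.norm_of_nonneg]
      split_ifs <;> positivity
    rw [summable_prod_of_nonneg (fun _ => norm_nonneg _)]
    constructor
    · intro S
      simp only [Function.uncurry, hn]
      exact (mult_hasSum ⟨DD S, DD_ne S⟩).summable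
    · simp only [Function.uncurry, hn]
      refine (summable_DD_sq.mul_right zetaQi2).congr fun S => ?_
      exact (mult_hasSum ⟨DD S, DD_ne S⟩).tsum_eq.symm
  have hc := hF.tsum_comm
  simp only [(hF1 _).tsum_eq] at hc
  have hF2 : ∀ G : NZ, ∑' S, F S G = if G = ⟨⊤, top_ne_bot⟩ then 1 else 0 := by
    intro G
    have h := (mobius_hasSum G.2).mul_right (1 / (normI G.1 : ℝ) ^ 2)
    have h' : ∑' S, F S G = (if G.1 = ⊤ then 1 else 0) * (1 / (normI G.1 : ℝ) ^ 2) := by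
      rw [← h.tsum_eq]
      congr 1; ext S
      simp only [F]; split_ifs <;> ring
    rw [h']
    by_cases hG : G.1 = ⊤
    · have : G = ⟨⊤, top_ne_bot⟩ := Subtype.ext hG
      rw [if_pos hG, if_pos this, normI_eq_one.2 hG]; norm_num
    · have : G ≠ ⟨⊤, top_ne_bot⟩ := fun h => hG (congrArg Subtype.val h)
      rw [if_neg hG, if_neg this, zero_mul]
  simp only [hF2, tsum_ite_eq] at hc
  have hz := zeta_pos
  simp only [← mul_assoc] at hc
  rw [tsum_mul_right] at hc
  convert! hs.hasSum using 1
  rw [div_eq_iff hz.ne']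
  exact hc

def coprimePairs (y : ℝ) : Set (Ideal GaussianInt × Ideal GaussianInt) := {p | p ∈ P y ∧ p.1 ⊔ p.2 = ⊤}

lemma P_eq (y : ℝ) : P y = idealsLe y ×ˢ idealsLe y := by
  ext p
  simp only [P, idealsLe, Set.mem_ofPred_eq, Set.mem_prod]
  tauto

lemma P_finite (y : ℝ) : (P y).Finite := by
  rw [P_eq]; exact (idealsLe_finite y).prod (idealsLe_finite y)

lemma P_ncard (y : ℝ) : (P y).ncard = Acount y ^ 2 := by
  rw [P_eq, Set.ncard_prod, Acount, sq]

lemma idealsLe_dvd (y : ℝ) {D : Ideal GaussianInt} (hD : D ≠ ⊥) :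
    {I | I ∈ idealsLe y ∧ D ∣ I}.ncard = Acount (y / normI D) := by
  have hpos : (0:ℝ) < normI D := by exact_mod_cast normI_pos hD
  have : {I | I ∈ idealsLe y ∧ D ∣ I} = (fun I => D * I) '' idealsLe (y / normI D) := by
    ext I
    simp only [idealsLe, Set.mem_ofPred_eq, Set.mem_image]
    constructor
    · rintro ⟨⟨h1, h2⟩, K, rfl⟩
      refine ⟨K, ⟨?_, ?_⟩, rfl⟩
      · rintro rfl; exact h1 (Ideal.mul_bot _)
      · rw [le_div_iff₀ hpos, mul_comm]
        rw [normI_mul] at h2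
        exact_mod_cast h2
    · rintro ⟨K, ⟨h1, h2⟩, rfl⟩
      refine ⟨⟨?_, ?_⟩, dvd_mul_right _ _⟩
      · rw [← Ideal.zero_eq_bot]; exact mul_ne_zero hD h1
      · rw [le_div_iff₀ hpos, mul_comm] at h2
        rw [normI_mul]
        exact_mod_cast h2
  rw [this, Set.InjOn.ncard_image, Acount]
  intro I _ J _ h
  exact mul_left_cancel₀ (a := D) hD h

open Classical in
lemma Bcount_hasSum (y : ℝ) :
    HasSum (fun S : Finset PrI => (-1 : ℝ) ^ S.card * (Acount (y / normI (DD S)) : ℝ) ^ 2)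
      ((coprimePairs y).ncard : ℝ) := by
  have h := hasSum_sum (s := (P_finite y).toFinset) (f := fun (p : Ideal GaussianInt × Ideal GaussianInt) (S : Finset PrI) => if DD S ∣ p.1 ⊔ p.2 then (-1 : ℝ) ^ S.card else 0)
    (a := fun p => if p.1 ⊔ p.2 = ⊤ then 1 else 0) (by
      intro p hp
      apply mobius_hasSum
      rw [Set.Finite.mem_toFinset] at hp
      intro h
      rw [sup_eq_bot_iff] at h
      exact hp.1 h.1)
  convert! h using 1
  · ext S
    rw [← Finset.sum_filter, Finset.sum_const, nsmul_eq_mul, mul_comm]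
    congr 1
    rw [← idealsLe_dvd y (DD_ne S)]
    norm_cast
    rw [sq, ← Set.ncard_prod, ← Set.ncard_coe_finset]
    congr 1
    ext p
    simp only [Set.mem_prod, Set.mem_ofPred_eq, Finset.coe_filter, Set.Finite.mem_toFinset, P_eq,
      Ideal.dvd_iff_le, sup_le_iff]
    tauto
  · rw [← Finset.sum_filter, Finset.sum_const, nsmul_eq_mul, mul_one]
    congr 1
    rw [← Set.ncard_coe_finset]
    congr 1
    ext p
    simp [coprimePairs]

lemma gcd_count (x : ℝ) {k : ℕ} (hk : 1 ≤ k) :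
    {p ∈ P x | normI (p.1 ⊔ p.2) = k}.ncard = (idealsNorm k).ncard * (coprimePairs (x / k)).ncard := by
  have hpos : (0:ℝ) < k := by exact_mod_cast hk
  have : {p ∈ P x | normI (p.1 ⊔ p.2) = k} =
      (fun q : Ideal GaussianInt × (Ideal GaussianInt × Ideal GaussianInt) => (q.1 * q.2.1, q.1 * q.2.2)) ''
        (idealsNorm k ×ˢ coprimePairs (x / k)) := by
    ext ⟨I, J⟩
    simp only [Set.mem_ofPred_eq, Set.mem_image, Set.mem_prod, idealsNorm, coprimePairs, P, Prod.exists,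
      Prod.mk.injEq]
    constructor
    · rintro ⟨⟨hI, hJ, hI', hJ'⟩, h⟩
      obtain ⟨K, hK⟩ : I ⊔ J ∣ I := Ideal.dvd_iff_le.2 le_sup_left
      obtain ⟨L, hL⟩ : I ⊔ J ∣ J := Ideal.dvd_iff_le.2 le_sup_right
      have hD : I ⊔ J ≠ ⊥ := fun h => hI (sup_eq_bot_iff.1 h).1
      refine ⟨I ⊔ J, K, L, ⟨⟨hD, h⟩, ⟨?_, ?_, ?_, ?_⟩, ?_⟩, hK.symm, hL.symm⟩
      · rintro rfl; exact hI (by rw [hK]; exact Ideal.mul_bot _)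
      · rintro rfl; exact hJ (by rw [hL]; exact Ideal.mul_bot _)
      · rw [hK, normI_mul, h] at hI'
        rw [le_div_iff₀ hpos, mul_comm]; exact_mod_cast hI'
      · rw [hL, normI_mul, h] at hJ'
        rw [le_div_iff₀ hpos, mul_comm]; exact_mod_cast hJ'
      · have : (I ⊔ J) * (K ⊔ L) = (I ⊔ J) * ⊤ := by
          rw [Ideal.mul_sup, ← hK, ← hL, Ideal.mul_top]
        exact mul_left_cancel₀ (a := I ⊔ J) hD this
    · rintro ⟨D, K, L, ⟨⟨hD, h⟩, ⟨hK, hL, hK', hL'⟩, hc⟩, rfl, rfl⟩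
      rw [le_div_iff₀ hpos, mul_comm, ← h] at hK' hL'
      refine ⟨⟨mul_ne_zero (M₀ := Ideal GaussianInt) hD hK, mul_ne_zero (M₀ := Ideal GaussianInt) hD hL, ?_, ?_⟩, ?_⟩
      · rw [normI_mul]; exact_mod_cast hK'
      · rw [normI_mul]; exact_mod_cast hL'
      · rw [← Ideal.mul_sup, hc, Ideal.mul_top, h]
  rw [this, Set.InjOn.ncard_image, Set.ncard_prod]
  rintro ⟨D, K, L⟩ ⟨⟨hD, _⟩, ⟨_, hc⟩⟩ ⟨D', K', L'⟩ ⟨⟨hD', _⟩, ⟨_, hc'⟩⟩ h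
  simp only [Prod.mk.injEq] at h hc hc' hD
  obtain ⟨h1, h2⟩ := h
  have e : D = D' := by
    have e1 : D * K ⊔ D * L = D := by rw [← Ideal.mul_sup, hc, Ideal.mul_top]
    have e2 : D' * K' ⊔ D' * L' = D' := by rw [← Ideal.mul_sup, hc', Ideal.mul_top]
    rw [← e1, ← e2, h1, h2]
  subst e
  rw [mul_left_cancel₀ (a := D) hD h1, mul_left_cancel₀ (a := D) hD h2]

noncomputable def ee (t : ℝ) : ℂ := Complex.exp ((2 * π * t : ℝ) * Complex.I)

lemma ee_norm (t : ℝ) : ‖ee t‖ = 1 := Complex.norm_exp_ofReal_mul_I _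

lemma ee_add (s t : ℝ) : ee (s + t) = ee s * ee t := by
  rw [ee, ee, ee, ← Complex.exp_add]; congr 1; push_cast; ring

lemma ee_int (k : ℤ) : ee k = 1 := by
  rw [ee, Complex.exp_eq_one_iff]
  exact ⟨k, by push_cast; ring⟩

lemma ee_re (t : ℝ) : (ee t).re = Real.cos (2 * π * t) := Complex.exp_ofReal_mul_I_re _

/-- `cot (π θ)` -/
noncomputable def kap (θ : ℝ) : ℝ := Real.cos (π * θ) / Real.sin (π * θ)

lemma kl_id {θ : ℝ} (h : Real.sin (π * θ) ≠ 0) :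
    ((1 + kap θ * Complex.I) / 2) * (1 - ee θ) = 1 := by
  have e : ee θ = (Real.cos (π * θ) + Real.sin (π * θ) * Complex.I) ^ 2 := by
    rw [ee, Complex.ofReal_cos, Complex.ofReal_sin, ← Complex.exp_mul_I, ← Complex.exp_nat_mul]
    congr 1; push_cast; ring
  have h' : (Real.sin (π * θ) : ℂ) ≠ 0 := by exact_mod_cast h
  have hcs : (Real.sin (π * θ) : ℂ) ^ 2 + (Real.cos (π * θ) : ℂ) ^ 2 = 1 := by
    exact_mod_cast Real.sin_sq_add_cos_sq (π * θ)
  rw [e, kap]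
  push_cast
  push_cast at hcs h'
  field_simp
  generalize Complex.sin (π * θ) = s at *
  generalize Complex.cos (π * θ) = c at *
  have hI := Complex.I_sq
  linear_combination (2 * s) * hcs + (s + c * Complex.I) * hcs * (-1) + (- s^3 -2*c^2*s - c * s^2 * Complex.I) * hI 

lemma kap_anti {a b δ : ℝ} (hδ : 0 < δ) (ha : δ ≤ a) (hab : a ≤ b) (hb : b ≤ 1 - δ) : kap b ≤ kap a := by
  have hpi := Real.pi_pos
  have sa : 0 < Real.sin (π * a) := Real.sin_pos_of_pos_of_lt_pi (by nlinarith) (by nlinarith)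
  have sb : 0 < Real.sin (π * b) := Real.sin_pos_of_pos_of_lt_pi (by nlinarith) (by nlinarith)
  rw [kap, kap, div_le_div_iff₀ sb sa]
  have : 0 ≤ Real.sin (π * b - π * a) :=
    Real.sin_nonneg_of_nonneg_of_le_pi (by nlinarith) (by nlinarith)
  rw [Real.sin_sub] at this
  linarith

lemma sin_lower {a δ : ℝ} (hδ : 0 < δ) (ha : δ ≤ a) (hb : a ≤ 1 - δ) : 2 * δ ≤ Real.sin (π * a) := by
  have hpi := Real.pi_pos
  rcases le_total a (1/2) with h | h
  · have := Real.mul_le_sin (x := π * a) (by nlinarith) (by nlinarith)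
    have e : 2 / π * (π * a) = 2 * a := by field_simp
    linarith
  · have := Real.mul_le_sin (x := π * (1 - a)) (by nlinarith) (by nlinarith)
    have e : 2 / π * (π * (1 - a)) = 2 * (1 - a) := by field_simp
    have e2 : Real.sin (π * (1 - a)) = Real.sin (π * a) := by
      rw [mul_sub, mul_one, Real.sin_pi_sub]
    linarith

lemma kap_bd {a δ : ℝ} (hδ : 0 < δ) (ha : δ ≤ a) (hb : a ≤ 1 - δ) : |kap a| ≤ 1 / (2 * δ) := by
  have h := sin_lower hδ ha hb
  have hs : 0 < Real.sin (π * a) := by linarith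
  rw [kap, abs_div, abs_of_pos hs]
  exact div_le_div₀ (by norm_num) (Real.abs_cos_le_one _) (by linarith) h

lemma c_bd {a δ : ℝ} (hδ : 0 < δ) (ha : δ ≤ a) (hb : a ≤ 1 - δ) :
    ‖((1 + kap a * Complex.I) / 2 : ℂ)‖ ≤ 1 / (4 * δ) := by
  have h := sin_lower hδ ha hb
  have hs : 0 < Real.sin (π * a) := by linarith
  have e : ((1 + kap a * Complex.I) / 2 : ℂ) =
      (Complex.exp ((-(π * a) : ℝ) * Complex.I) * Complex.I) * ((1 / (2 * Real.sin (π * a)) : ℝ) : ℂ) := by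
    have h' : (Real.sin (π * a) : ℂ) ≠ 0 := by exact_mod_cast hs.ne'
    rw [Complex.exp_mul_I, ← Complex.ofReal_cos, ← Complex.ofReal_sin, Real.cos_neg, Real.sin_neg, kap]
    push_cast
    push_cast at h'
    field_simp
    linear_combination (Complex.sin (π * a)) * Complex.I_sq
  rw [e, norm_mul, norm_mul, Complex.norm_exp_ofReal_mul_I, Complex.norm_I, one_mul, one_mul,
    Complex.norm_real, Real.norm_of_nonneg (by positivity)]
  apply one_div_le_one_div_of_le (by positivity) (by linarith)

lemma kusmin_landau (u : ℕ → ℝ) (m : ℕ) (k : ℤ) {δ : ℝ} (hδ : 0 < δ)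
    (hmono : ∀ n, n < m → u (n + 1) - u n ≤ u (n + 2) - u (n + 1))
    (hlo : ∀ n, n ≤ m → k + δ ≤ u (n + 1) - u n)
    (hhi : ∀ n, n ≤ m → u (n + 1) - u n ≤ k + 1 - δ) :
    ‖∑ n ∈ Finset.range (m + 1), ee (u n)‖ ≤ 1 / δ := by
  set θ : ℕ → ℝ := fun n => u (n + 1) - u n - k with hθ
  set c : ℕ → ℂ := fun n => (1 + kap (θ n) * Complex.I) / 2 with hc
  have hθlo : ∀ n ≤ m, δ ≤ θ n := fun n hn => by have := hlo n hn; simp only [hθ]; linarith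
  have hθhi : ∀ n ≤ m, θ n ≤ 1 - δ := fun n hn => by have := hhi n hn; simp only [hθ]; linarith
  have hz : ∀ n ≤ m, ee (u n) = c n * (ee (u n) - ee (u (n + 1))) := by
    intro n hn
    have hs : Real.sin (π * θ n) ≠ 0 := by
      have := sin_lower hδ (hθlo n hn) (hθhi n hn); linarith
    have h1 := kl_id hs
    have h2 : ee (u (n + 1)) = ee (u n) * ee (θ n) := by
      have : u (n + 1) = u n + θ n + k := by simp only [hθ]; ring
      rw [this, ee_add, ee_add, ee_int, mul_one]
    rw [h2]
    simp only [hc]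
    linear_combination (-ee (u n)) * h1
  have habel : ∀ j ≤ m, ∑ n ∈ Finset.range (j + 1), ee (u n) =
      c 0 * ee (u 0) - c j * ee (u (j + 1)) + ∑ n ∈ Finset.range j, (c (n + 1) - c n) * ee (u (n + 1)) := by
    intro j
    induction j with
    | zero => intro h; simp; linear_combination hz 0 h
    | succ j ih =>
      intro h
      rw [Finset.sum_range_succ, ih (by omega), Finset.sum_range_succ _ j]
      linear_combination hz (j + 1) h
  have htel : ∀ j ≤ m, ‖∑ n ∈ Finset.range j, (c (n + 1) - c n) * ee (u (n + 1))‖ ≤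
      (kap (θ 0) - kap (θ j)) / 2 := by
    intro j
    induction j with
    | zero => intro h; simp
    | succ j ih =>
      intro h
      rw [Finset.sum_range_succ]
      refine (norm_add_le _ _).trans ?_
      have h1 := ih (by omega)
      have h2 : ‖(c (j + 1) - c j) * ee (u (j + 1))‖ = (kap (θ j) - kap (θ (j + 1))) / 2 := by
        rw [norm_mul, ee_norm, mul_one]
        have : c (j + 1) - c j = (((kap (θ (j + 1)) - kap (θ j)) / 2 : ℝ) : ℂ) * Complex.I := by
          simp only [hc]; push_cast; ring
        rw [this, norm_mul, Complex.norm_I, mul_one, Complex.norm_real, Real.norm_of_nonpos]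
        · ring
        · have : θ j ≤ θ (j + 1) := by
            have := hmono j (by omega)
            simp only [hθ]; linarith
          have := kap_anti hδ (hθlo j (by omega)) this (hθhi (j + 1) h)
          linarith
      linarith
  rw [habel m le_rfl]
  have b0 := c_bd hδ (hθlo 0 (by omega)) (hθhi 0 (by omega))
  have bm := c_bd hδ (hθlo m le_rfl) (hθhi m le_rfl)
  have k0 := abs_le.1 (kap_bd hδ (hθlo 0 (by omega)) (hθhi 0 (by omega)))
  have km := abs_le.1 (kap_bd hδ (hθlo m le_rfl) (hθhi m le_rfl))
  have t := htel m le_rfl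
  calc _ ≤ ‖c 0 * ee (u 0) - c m * ee (u (m + 1))‖ + ‖∑ n ∈ Finset.range m, (c (n + 1) - c n) * ee (u (n + 1))‖ := norm_add_le _ _
    _ ≤ (‖c 0 * ee (u 0)‖ + ‖c m * ee (u (m + 1))‖) + (kap (θ 0) - kap (θ m)) / 2 := add_le_add (norm_sub_le _ _) t
    _ = (‖c 0‖ + ‖c m‖) + (kap (θ 0) - kap (θ m)) / 2 := by rw [norm_mul, norm_mul, ee_norm, ee_norm, mul_one, mul_one]
    _ ≤ (1 / (4 * δ) + 1 / (4 * δ)) + (1 / (2 * δ) + 1 / (2 * δ)) / 2 := by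
        have := k0.2; have := km.1
        simp only [hc]
        linarith
    _ = 1 / δ := by field_simp; norm_num

/-- spacing count -/
lemma card_spaced (d : ℕ → ℝ) (s : Finset ℕ) {l L lo : ℝ} (hl : 0 < l) (hL : 0 ≤ L)
    (hsp : ∀ m ∈ s, ∀ n ∈ s, m ≤ n → l * ((n : ℝ) - m) ≤ d n - d m)
    (hr : ∀ n ∈ s, lo ≤ d n ∧ d n ≤ lo + L) : (s.card : ℝ) ≤ L / l + 1 := by
  rcases s.eq_empty_or_nonempty with rfl | hne
  · simp; positivity
  have h1 : s ⊆ Finset.Icc (s.min' hne) (s.max' hne) := fun x hx =>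
    Finset.mem_Icc.2 ⟨s.min'_le x hx, s.le_max' x hx⟩
  have h2 := Finset.card_le_card h1
  rw [Nat.card_Icc] at h2
  have hle : s.min' hne ≤ s.max' hne := s.min'_le _ (s.max'_mem hne)
  have h3 := hsp _ (s.min'_mem hne) _ (s.max'_mem hne) hle
  have h4 := hr _ (s.min'_mem hne)
  have h5 := hr _ (s.max'_mem hne)
  have h6 : (s.card : ℝ) ≤ (s.max' hne : ℝ) + 1 - s.min' hne := by
    have : s.card + s.min' hne ≤ s.max' hne + 1 := by omega
    have : (s.card : ℝ) + s.min' hne ≤ s.max' hne + 1 := by exact_mod_cast this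
    linarith
  have h7 : ((s.max' hne : ℝ) - s.min' hne) ≤ L / l := by
    rw [le_div_iff₀ hl]; nlinarith
  linarith

lemma vdc_small (u : ℕ → ℝ) (N : ℕ) {l α : ℝ} (hl : 0 < l) (hl4 : l ≤ 1 / 4) (hα : 1 ≤ α)
    (h1 : ∀ n, n + 1 < N → l ≤ (u (n + 2) - u (n + 1)) - (u (n + 1) - u n))
    (h2 : ∀ n, n + 1 < N → (u (n + 2) - u (n + 1)) - (u (n + 1) - u n) ≤ α * l) :
    ‖∑ n ∈ Finset.range N, ee (u n)‖ ≤ 5 * α * √l * N + 10 / √l := by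
  set d : ℕ → ℝ := fun n => u (n + 1) - u n with hd
  set δ := √l with hδdef
  have hδ : 0 < δ := Real.sqrt_pos.2 hl
  have hδ2 : δ * δ = l := Real.mul_self_sqrt hl.le
  have hδh : δ ≤ 1 / 2 := by nlinarith
  rcases Nat.eq_zero_or_pos N with rfl | hN
  · simp; positivity
  have hsp : ∀ m n, m ≤ n → n < N → l * ((n : ℝ) - m) ≤ d n - d m ∧ d n - d m ≤ α * l * ((n : ℝ) - m) := by
    intro m n hmn
    induction n, hmn using Nat.le_induction with
    | base => intro _; simp
    | succ n hmn ih =>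
      intro h
      have := ih (by omega)
      have a1 := h1 n h
      have a2 := h2 n h
      have e : d (n + 1) = u (n + 2) - u (n + 1) := rfl
      have e' : d n = u (n + 1) - u n := rfl
      push_cast
      constructor <;> nlinarith
  have hmono : ∀ m n, m ≤ n → n < N → d m ≤ d n := by
    intro m n hmn hn
    have := (hsp m n hmn hn).1
    have : (m : ℝ) ≤ n := by exact_mod_cast hmn
    nlinarith
  set K := Finset.Icc ⌊d 0⌋ ⌊d (N - 1)⌋ with hK
  have hmaps : ∀ n ∈ Finset.range N, ⌊d n⌋ ∈ K := by
    intro n hn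
    rw [Finset.mem_range] at hn
    rw [hK, Finset.mem_Icc]
    exact ⟨Int.floor_le_floor (hmono 0 n (by omega) hn), Int.floor_le_floor (hmono n (N - 1) (by omega) (by omega))⟩
  rw [← Finset.sum_fiberwise_of_maps_to hmaps]
  have hKcard : (K.card : ℝ) ≤ α * l * N + 2 := by
    have h0 := hmono 0 (N - 1) (by omega) (by omega)
    have hf := Int.floor_le_floor h0
    rw [hK, Int.card_Icc]
    have : (((⌊d (N - 1)⌋ + 1 - ⌊d 0⌋).toNat : ℕ) : ℤ) = ⌊d (N - 1)⌋ + 1 - ⌊d 0⌋ :=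
      Int.toNat_of_nonneg (by omega)
    have : (((⌊d (N - 1)⌋ + 1 - ⌊d 0⌋).toNat : ℕ) : ℝ) = (⌊d (N - 1)⌋ : ℝ) + 1 - ⌊d 0⌋ := by exact_mod_cast this
    rw [this]
    have f1 := Int.floor_le (d (N - 1))
    have f2 := Int.lt_floor_add_one (d 0)
    have f3 := (hsp 0 (N - 1) (by omega) (by omega)).2
    have f4 : ((N - 1 : ℕ) : ℝ) ≤ N := by exact_mod_cast Nat.sub_le N 1
    have f5 : α * l * (((N - 1 : ℕ) : ℝ) - (0 : ℕ)) ≤ α * l * N := by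
      push_cast
      rw [sub_zero]
      exact mul_le_mul_of_nonneg_left f4 (by positivity)
    linarith
  have hpiece : ∀ k ∈ K, ‖∑ n ∈ Finset.range N with ⌊d n⌋ = k, ee (u n)‖ ≤ 5 / δ := by
    intro k _
    set A := {n ∈ Finset.range N | ⌊d n⌋ = k} with hA
    have hAm : ∀ n, n ∈ A ↔ n < N ∧ (k : ℝ) ≤ d n ∧ d n < k + 1 := by
      intro n
      rw [hA, Finset.mem_filter, Finset.mem_range, Int.floor_eq_iff]
    set M := {n ∈ A | k + δ ≤ d n ∧ d n ≤ k + 1 - δ} with hM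
    set Lo := {n ∈ A | d n < k + δ} with hLo
    set Hi := {n ∈ A | k + 1 - δ < d n} with hHi
    have hcover : A ⊆ M ∪ (Lo ∪ Hi) := by
      intro n hn
      simp only [hM, hLo, hHi, Finset.mem_union, Finset.mem_filter, hn, true_and]
      by_cases a1 : d n < k + δ
      · tauto
      · by_cases a2 : k + 1 - δ < d n
        · tauto
        · push Not at a1 a2; exact Or.inl ⟨a1, a2⟩
    have hMA : M ⊆ A := Finset.filter_subset _ _
    have hcd : δ / l + 1 ≤ 2 / δ := by
      have e : δ / l = 1 / δ := by rw [← hδ2]; field_simp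
      have : 1 ≤ 1 / δ := by rw [le_div_iff₀ hδ]; linarith
      have e2 : 2 / δ = 1 / δ + 1 / δ := by ring
      rw [e, e2]; linarith
    have hLoc : (Lo.card : ℝ) ≤ 2 / δ := by
      refine (card_spaced d Lo (lo := k) hl hδ.le ?_ ?_).trans hcd
      · intro m _ n hn hmn
        exact (hsp m n hmn ((hAm n).1 (Finset.mem_filter.1 hn).1).1).1
      · intro n hn
        rw [hLo, Finset.mem_filter, hAm] at hn
        exact ⟨hn.1.2.1, hn.2.le⟩
    have hHic : (Hi.card : ℝ) ≤ 2 / δ := by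
      refine (card_spaced d Hi (lo := k + 1 - δ) hl hδ.le ?_ ?_).trans hcd
      · intro m _ n hn hmn
        exact (hsp m n hmn ((hAm n).1 (Finset.mem_filter.1 hn).1).1).1
      · intro n hn
        rw [hHi, Finset.mem_filter, hAm] at hn
        exact ⟨hn.2.le, by linarith [hn.1.2.2]⟩
    have hMs : ‖∑ n ∈ M, ee (u n)‖ ≤ 1 / δ := by
      rcases M.eq_empty_or_nonempty with he | hne
      · rw [he]; simp; positivity
      set p := M.min' hne with hp
      set q := M.max' hne with hq
      have hpM : p ∈ M := M.min'_mem hne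
      have hqM : q ∈ M := M.max'_mem hne
      have hpq : p ≤ q := M.min'_le _ hqM
      have hMm : ∀ n, n ∈ M ↔ n < N ∧ (k + δ ≤ d n ∧ d n ≤ k + 1 - δ) := by
        intro n
        rw [hM, Finset.mem_filter, hAm]
        constructor
        · rintro ⟨a, b⟩; exact ⟨a.1, b⟩
        · rintro ⟨a, b⟩; exact ⟨⟨a, by linarith, by linarith⟩, b⟩
      have hIco : M = Finset.Ico p (q + 1) := by
        ext n
        rw [Finset.mem_Ico]
        constructor
        · intro hn
          exact ⟨M.min'_le n hn, Nat.lt_succ_of_le (M.le_max' n hn)⟩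
        · rintro ⟨a, b⟩
          have hqN := ((hMm q).1 hqM)
          have hpN := ((hMm p).1 hpM)
          rw [hMm]
          refine ⟨by omega, ?_, ?_⟩
          · exact hpN.2.1.trans (hmono p n a (by omega))
          · exact (hmono n q (by omega) hqN.1).trans hqN.2.2
      have hin : ∀ n, p ≤ n → n ≤ q → n ∈ M := fun n a b => by
        rw [hIco, Finset.mem_Ico]; omega
      rw [hIco, Finset.sum_Ico_eq_sum_range]
      have e : q + 1 - p = (q - p) + 1 := by omega
      rw [e]
      refine kusmin_landau (fun n => u (p + n)) (q - p) k hδ ?_ ?_ ?_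
      · intro n hn
        have := hmono (p + n) (p + n + 1) (by omega) ((hMm _).1 (hin (p + n + 1) (by omega) (by omega))).1
        exact this
      · intro n hn
        exact ((hMm _).1 (hin (p + n) (by omega) (by omega))).2.1
      · intro n hn
        exact ((hMm _).1 (hin (p + n) (by omega) (by omega))).2.2
    have hrest : ‖∑ n ∈ A \ M, ee (u n)‖ ≤ 4 / δ := by
      have c1 : A \ M ⊆ Lo ∪ Hi := by
        intro n hn
        rw [Finset.mem_sdiff] at hn
        have := hcover hn.1
        rw [Finset.mem_union] at this
        tauto
      have c2 : ((A \ M).card : ℝ) ≤ Lo.card + Hi.card := by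
        exact_mod_cast (Finset.card_le_card c1).trans (Finset.card_union_le _ _)
      have c3 : ‖∑ n ∈ A \ M, ee (u n)‖ ≤ (A \ M).card := by
        refine (norm_sum_le _ _).trans ?_
        simp [ee_norm]
      have e : 4 / δ = 2 / δ + 2 / δ := by ring
      linarith
    rw [← Finset.sum_sdiff hMA]
    have e : 5 / δ = 4 / δ + 1 / δ := by ring
    rw [e]
    exact (norm_add_le _ _).trans (add_le_add hrest hMs)
  calc _ ≤ ∑ k ∈ K, 5 / δ := norm_sum_le_of_le _ hpiece
    _ = K.card * (5 / δ) := by rw [Finset.sum_const, nsmul_eq_mul]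
    _ ≤ (α * l * N + 2) * (5 / δ) := mul_le_mul_of_nonneg_right hKcard (by positivity)
    _ = _ := by
      rw [← hδ2]; field_simp; ring

lemma vdc (u : ℕ → ℝ) (N : ℕ) {l α : ℝ} (hl : 0 < l) (hα : 1 ≤ α)
    (h1 : ∀ n, n + 1 < N → l ≤ (u (n + 2) - u (n + 1)) - (u (n + 1) - u n))
    (h2 : ∀ n, n + 1 < N → (u (n + 2) - u (n + 1)) - (u (n + 1) - u n) ≤ α * l) :
    ‖∑ n ∈ Finset.range N, ee (u n)‖ ≤ 5 * α * √l * N + 10 / √l := by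
  rcases le_or_gt l (1/4) with h | h
  · exact vdc_small u N hl h hα h1 h2
  · have c3 : ‖∑ n ∈ Finset.range N, ee (u n)‖ ≤ N := by
      refine (norm_sum_le _ _).trans ?_
      simp [ee_norm]
    have hs : 1 / 2 ≤ √l := Real.le_sqrt_of_sq_le (by norm_num; linarith)
    have : 1 ≤ 5 * α * √l := by nlinarith
    have h3 : (N : ℝ) ≤ 5 * α * √l * N := le_mul_of_one_le_left (by positivity) this
    have : 0 ≤ 10 / √l := by positivity
    linarith

noncomputable def psi (t : ℝ) : ℝ := Int.fract t - 1 / 2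
noncomputable def Psi (t : ℝ) : ℝ := (Int.fract t ^ 2 - Int.fract t + 1 / 6) / 2

lemma Psi_int (t : ℝ) (k : ℤ) : Psi (t + k) = Psi t := by
  simp [Psi, Int.fract_add_intCast]

lemma Psi_of_mem {s : ℝ} (h0 : 0 ≤ s) (h1 : s < 1) : Psi s = (s ^ 2 - s + 1 / 6) / 2 := by
  rw [Psi, Int.fract_eq_self.2 ⟨h0, h1⟩]

lemma psi_lower (t : ℝ) {η : ℝ} (h0 : 0 < η) (h1 : η ≤ 1) :
    Psi (t + η) - Psi t - η ^ 2 / 2 ≤ η * psi t := by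
  have hs0 := Int.fract_nonneg t
  have hs1 := Int.fract_lt_one t
  have e : t = Int.fract t + ⌊t⌋ := (Int.fract_add_floor t).symm
  have e1 : Psi (t + η) = Psi (Int.fract t + η) := by
    conv_lhs => rw [e]
    rw [add_right_comm, Psi_int]
  rw [e1, psi]
  have e2 : Psi t = (Int.fract t ^ 2 - Int.fract t + 1 / 6) / 2 := rfl
  rw [e2]
  generalize Int.fract t = s at *
  rcases lt_or_ge (s + η) 1 with h | h
  · rw [Psi_of_mem (by linarith) h]; nlinarith
  · have : Psi (s + η) = Psi (s + η - 1) := by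
      have := Psi_int (s + η - 1) 1
      rw [← this]; congr 1; push_cast; ring
    rw [this, Psi_of_mem (by linarith) (by linarith)]; nlinarith

lemma psi_upper (t : ℝ) {η : ℝ} (h0 : 0 < η) (h1 : η ≤ 1) :
    η * psi t ≤ -(Psi (t + -η) - Psi t) + η ^ 2 / 2 := by
  have hs0 := Int.fract_nonneg t
  have hs1 := Int.fract_lt_one t
  have e : t = Int.fract t + ⌊t⌋ := (Int.fract_add_floor t).symm
  have e1 : Psi (t + -η) = Psi (Int.fract t - η) := by
    conv_lhs => rw [e]
    rw [add_right_comm, Psi_int, sub_eq_add_neg]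
  rw [e1, psi]
  have e2 : Psi t = (Int.fract t ^ 2 - Int.fract t + 1 / 6) / 2 := rfl
  rw [e2]
  generalize Int.fract t = s at *
  rcases lt_or_ge (s - η) 0 with h | h
  · have : Psi (s - η) = Psi (s - η + 1) := by
      have := Psi_int (s - η) 1
      rw [← this]; congr 1; push_cast; ring
    rw [this, Psi_of_mem (by linarith) (by linarith)]; nlinarith
  · rw [Psi_of_mem (by linarith) (by linarith)]; nlinarith

lemma bern2 (s : ℝ) : (Polynomial.map (algebraMap ℚ ℝ) (Polynomial.bernoulli 2)).eval s = s ^ 2 - s + 1 / 6 := by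
  simp [Polynomial.bernoulli, Finset.sum_range_succ, bernoulli_one, bernoulli_two, bernoulli_zero, Polynomial.eval_monomial]
  ring

lemma hasSum_Psi (t : ℝ) :
    HasSum (fun n : ℕ => 1 / (n : ℝ) ^ 2 * Real.cos (2 * π * n * t)) (2 * π ^ 2 * Psi t) := by
  have h := hasSum_one_div_nat_pow_mul_cos (k := 1) (by norm_num) (x := Int.fract t)
    ⟨Int.fract_nonneg t, (Int.fract_lt_one t).le⟩
  convert! h using 1
  · ext n
    congr 1
    have e : t = Int.fract t + ⌊t⌋ := (Int.fract_add_floor t).symm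
    conv_lhs => rw [e]
    have : 2 * π * n * (Int.fract t + ⌊t⌋) = 2 * π * n * Int.fract t + ((n * ⌊t⌋ : ℤ) : ℝ) * (2 * π) := by
      push_cast; ring
    rw [this, Real.cos_add_int_mul_two_pi]
  · rw [mul_one, bern2, Psi]
    norm_num [Nat.factorial]
    ring

noncomputable def ww (H : ℕ) (h : ℕ) : ℝ := min 1 ((h : ℝ) / H) * (√h / (h : ℝ) ^ 2)

lemma ww_nonneg (H h : ℕ) : 0 ≤ ww H h := by
  unfold ww; positivity

lemma ww_sum_a {H : ℕ} (hH : 1 ≤ H) : ∀ M, M ≤ H → ∑ h ∈ Finset.range (M + 1), ww H h ≤ 2 * √M / H := by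
  intro M
  induction M with
  | zero => intro _; simp [ww]
  | succ M ih =>
    intro h
    rw [Finset.sum_range_succ]
    have h1 := ih (by omega)
    have hHp : (0:ℝ) < H := by exact_mod_cast hH
    have h2 : ww H (M + 1) ≤ 2 * (√(M + 1 : ℕ) - √M) / H := by
      set a := √((M + 1 : ℕ) : ℝ) with ha
      set b := √(M : ℝ) with hb
      have ha2 : a ^ 2 = (M + 1 : ℕ) := Real.sq_sqrt (by positivity)
      have hb2 : b ^ 2 = M := Real.sq_sqrt (by positivity)
      have hap : 0 < a := Real.sqrt_pos.2 (by positivity)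
      have hb0 : 0 ≤ b := Real.sqrt_nonneg _
      push_cast at ha2
      have hab : b ≤ a := by nlinarith
      calc ww H (M + 1) ≤ (a ^ 2 / H) * (a / (a ^ 2) ^ 2) := by
            rw [ww, ← ha]; push_cast; rw [ha2]
            exact mul_le_mul_of_nonneg_right (min_le_right _ _) (by positivity)
        _ = (1 / a) / H := by field_simp
        _ ≤ _ := by
          apply div_le_div_of_nonneg_right _ hHp.le
          rw [div_le_iff₀ hap]
          nlinarith [sq_nonneg (a - b)]
    have e : 2 * √((M + 1 : ℕ) : ℝ) / H = 2 * √M / H + 2 * (√(M + 1 : ℕ) - √M) / H := by ring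
    rw [e]; linarith

lemma ww_sum_b {H : ℕ} (hH : 1 ≤ H) : ∀ M, H ≤ M →
    ∑ h ∈ Finset.range (M + 1), ww H h ≤ 4 / √H - 2 / √M := by
  intro M hM
  have hHp : (0:ℝ) < H := by exact_mod_cast hH
  induction M, hM using Nat.le_induction with
  | base =>
    refine (ww_sum_a hH H le_rfl).trans (le_of_eq ?_)
    have hs : √(H:ℝ) ^ 2 = H := Real.sq_sqrt hHp.le
    have hs0 : 0 < √(H:ℝ) := Real.sqrt_pos.2 hHp
    have : 2 * √(H:ℝ) / H = 2 / √H := by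
      nth_rw 2 [← hs]; field_simp
    rw [this]; ring
  | succ M hM ih =>
    rw [Finset.sum_range_succ]
    have h2 : ww H (M + 1) ≤ 2 / √M - 2 / √(M + 1 : ℕ) := by
      set a := √((M + 1 : ℕ) : ℝ) with ha
      set b := √(M : ℝ) with hb
      have ha2 : a ^ 2 = (M + 1 : ℕ) := Real.sq_sqrt (by positivity)
      have hb2 : b ^ 2 = M := Real.sq_sqrt (by positivity)
      have hap : 0 < a := Real.sqrt_pos.2 (by positivity)
      have hbp : 0 < b := Real.sqrt_pos.2 (by exact_mod_cast (by omega : 0 < M))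
      push_cast at ha2
      have hab : b ≤ a := by nlinarith
      calc ww H (M + 1) ≤ 1 * (a / (a ^ 2) ^ 2) := by
            rw [ww, ← ha]; push_cast; rw [ha2]
            exact mul_le_mul_of_nonneg_right (min_le_left _ _) (by positivity)
        _ = 1 / a ^ 3 := by field_simp
        _ ≤ 2 / (a * b * (a + b)) := by
          rw [div_le_div_iff₀ (by positivity) (by positivity)]
          have h1 : a * b ≤ a * a := mul_le_mul_of_nonneg_left hab hap.le
          have h2 : a * b * (a + b) ≤ a * a * (a + a) := mul_le_mul h1 (by linarith) (by positivity) (by positivity)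
          nlinarith
        _ = 2 / b - 2 / a := by
          have : a ^ 2 - b ^ 2 = 1 := by rw [ha2, hb2]; ring
          field_simp
          linear_combination -this
    linarith

lemma ww_sum {H : ℕ} (hH : 1 ≤ H) (M : ℕ) : ∑ h ∈ Finset.range M, ww H h ≤ 4 / √H := by
  have h1 : ∑ h ∈ Finset.range M, ww H h ≤ ∑ h ∈ Finset.range (M + H + 1), ww H h :=
    Finset.sum_le_sum_of_subset_of_nonneg (Finset.range_mono (by omega)) (fun _ _ _ => ww_nonneg _ _)
  have h2 := ww_sum_b hH (M + H) (by omega)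
  have : 0 ≤ 2 / √((M + H : ℕ) : ℝ) := by positivity
  linarith

lemma ee_sub_one (t : ℝ) : ‖ee t - 1‖ ≤ 2 * π * |t| := by
  rw [ee, mul_comm]
  refine (Real.norm_exp_I_mul_ofReal_sub_one_le).trans (le_of_eq ?_)
  rw [Real.norm_eq_abs, abs_mul, abs_of_pos (by positivity)]

lemma Psi_diff (v : ℕ → ℝ) (N : ℕ) {l α : ℝ} (hl : 0 < l) (hα : 1 ≤ α)
    (h1 : ∀ n, n + 1 < N → l ≤ (v (n + 1) - v n) - (v (n + 2) - v (n + 1)))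
    (h2 : ∀ n, n + 1 < N → (v (n + 1) - v n) - (v (n + 2) - v (n + 1)) ≤ α * l)
    {H : ℕ} (hH : 1 ≤ H) (η : ℝ) (hη : |η| = 1 / H) :
    |2 * π ^ 2 * ∑ n ∈ Finset.range N, (Psi (v n + η) - Psi (v n))| ≤
      2 * π * (20 * α * √l * N / √H + 40 / (√l * H)) := by
  have hHp : (0:ℝ) < H := by exact_mod_cast hH
  have hs : HasSum (fun h : ℕ => ∑ n ∈ Finset.range N, (1 / (h : ℝ) ^ 2 * Real.cos (2 * π * h * (v n + η)) -
      1 / (h : ℝ) ^ 2 * Real.cos (2 * π * h * v n))) (∑ n ∈ Finset.range N, (2 * π ^ 2 * Psi (v n + η) - 2 * π ^ 2 * Psi (v n))) :=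
    hasSum_sum fun n _ => (hasSum_Psi _).sub (hasSum_Psi _)
  have e0 : ∑ n ∈ Finset.range N, (2 * π ^ 2 * Psi (v n + η) - 2 * π ^ 2 * Psi (v n)) =
      2 * π ^ 2 * ∑ n ∈ Finset.range N, (Psi (v n + η) - Psi (v n)) := by
    rw [Finset.mul_sum]; exact Finset.sum_congr rfl fun n _ => by ring
  rw [e0] at hs
  have hterm : ∀ h : ℕ, |∑ n ∈ Finset.range N, (1 / (h : ℝ) ^ 2 * Real.cos (2 * π * h * (v n + η)) -
      1 / (h : ℝ) ^ 2 * Real.cos (2 * π * h * v n))| ≤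
      2 * π * (5 * α * √l * N * ww H h + 10 / √l * (1 / H * ww 1 h)) := by
    intro h
    rcases Nat.eq_zero_or_pos h with rfl | hh
    · simp [ww]
    have hhp : (0:ℝ) < h := by exact_mod_cast hh
    have hh1 : (1:ℝ) ≤ h := by exact_mod_cast hh
    set S : ℂ := ∑ n ∈ Finset.range N, ee (-(h * v n)) with hS
    have hSb : ‖S‖ ≤ 5 * α * √(h * l) * N + 10 / √(h * l) := by
      refine vdc (fun n => -(h * v n)) N (mul_pos hhp hl) hα ?_ ?_
      · intro n hn
        have := mul_le_mul_of_nonneg_left (h1 n hn) hhp.le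
        linarith
      · intro n hn
        have := mul_le_mul_of_nonneg_left (h2 n hn) hhp.le
        linarith
    have e1 : ∑ n ∈ Finset.range N, (1 / (h : ℝ) ^ 2 * Real.cos (2 * π * h * (v n + η)) -
      1 / (h : ℝ) ^ 2 * Real.cos (2 * π * h * v n)) = 1 / (h:ℝ) ^ 2 * (S * (ee (-(h * η)) - 1)).re := by
      rw [hS, Finset.sum_mul, Complex.re_sum, Finset.mul_sum]
      refine Finset.sum_congr rfl fun n _ => ?_
      rw [← mul_sub]
      congr 1
      rw [mul_sub, mul_one, ← ee_add, Complex.sub_re, ee_re, ee_re]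
      congr 1
      · rw [← Real.cos_neg]; congr 1; ring
      · rw [← Real.cos_neg]; congr 1; ring
    have hm : ‖ee (-(h * η)) - 1‖ ≤ 2 * π * min 1 ((h:ℝ) / H) := by
      have hpi := Real.pi_gt_three
      rw [mul_min_of_nonneg _ _ (by positivity), le_min_iff]
      constructor
      · refine (norm_sub_le _ _).trans ?_
        rw [ee_norm, norm_one]; linarith
      · refine (ee_sub_one _).trans (le_of_eq ?_)
        rw [abs_neg, abs_mul, hη, abs_of_pos hhp]; ring
    rw [e1, abs_mul, abs_of_pos (by positivity)]
    have hre : |(S * (ee (-(h * η)) - 1)).re| ≤ (5 * α * √(h * l) * N + 10 / √(h * l)) * (2 * π * min 1 ((h:ℝ) / H)) := by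
      refine (Complex.abs_re_le_norm _).trans ?_
      rw [norm_mul]
      exact mul_le_mul hSb hm (norm_nonneg _) (by positivity)
    refine (mul_le_mul_of_nonneg_left hre (by positivity)).trans ?_
    rw [Real.sqrt_mul hhp.le]
    have hw1 : ww 1 h = √h / (h:ℝ) ^ 2 := by
      rw [ww, Nat.cast_one, div_one, min_eq_left hh1, one_mul]
    rw [hw1, ww]
    set a := √(h:ℝ) with ha
    have ha2 : a ^ 2 = h := Real.sq_sqrt hhp.le
    have hap : 0 < a := Real.sqrt_pos.2 hhp
    have hmin : min 1 ((h:ℝ) / H) ≤ h / H := min_le_right _ _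
    have hlp : 0 < √l := Real.sqrt_pos.2 hl
    set m := min 1 ((h:ℝ) / H) with hm
    have t2 : 1 / (h:ℝ)^2 * (10 / (a * √l) * (2 * π * m)) ≤ 2 * π * (10 / √l * (1 / H * (a / (h:ℝ)^2))) := by
      calc 1 / (h:ℝ)^2 * (10 / (a * √l) * (2 * π * m)) ≤ 1 / (h:ℝ)^2 * (10 / (a * √l) * (2 * π * (h / H))) := by
            gcongr
        _ = 2 * π * (10 / √l * (1 / H * (a / (h:ℝ)^2))) := by
            rw [← ha2]; field_simp
    have t1 : 1 / (h:ℝ)^2 * ((5 * α * (a * √l) * N) * (2 * π * m)) = 2 * π * (5 * α * √l * N * (m * (a / (h:ℝ)^2))) := by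
      ring
    calc _ = 1 / (h:ℝ)^2 * ((5 * α * (a * √l) * N) * (2 * π * m)) + 1 / (h:ℝ)^2 * (10 / (a * √l) * (2 * π * m)) := by ring
      _ ≤ _ := by rw [t1]; linarith
  refine le_of_tendsto (hs.tendsto_sum_nat.abs) (Filter.Eventually.of_forall fun M => ?_)
  refine (Finset.abs_sum_le_sum_abs _ _).trans ((Finset.sum_le_sum fun h _ => hterm h).trans ?_)
  rw [← Finset.mul_sum, Finset.sum_add_distrib, ← Finset.mul_sum, ← Finset.mul_sum, ← Finset.mul_sum]
  have w1 := ww_sum hH M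
  have w2 := ww_sum (H := 1) le_rfl M
  rw [Nat.cast_one, Real.sqrt_one, div_one] at w2
  have hlp : 0 < √l := Real.sqrt_pos.2 hl
  calc _ ≤ 2 * π * (5 * α * √l * N * (4 / √H) + 10 / √l * (1 / H * 4)) := by gcongr
    _ = _ := by field_simp; ring

lemma psi_sum (v : ℕ → ℝ) (N : ℕ) {l α : ℝ} (hl : 0 < l) (hα : 1 ≤ α)
    (h1 : ∀ n, n + 1 < N → l ≤ (v (n + 1) - v n) - (v (n + 2) - v (n + 1)))
    (h2 : ∀ n, n + 1 < N → (v (n + 1) - v n) - (v (n + 2) - v (n + 1)) ≤ α * l)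
    {H : ℕ} (hH : 1 ≤ H) :
    |∑ n ∈ Finset.range N, psi (v n)| ≤ 20 * α * √l * N * √H + 40 / √l + N / H := by
  have hHp : (0:ℝ) < H := by exact_mod_cast hH
  have hH1 : (1:ℝ) ≤ H := by exact_mod_cast hH
  have hη : (0:ℝ) < 1 / H := by positivity
  have hη1 : (1:ℝ) / H ≤ 1 := by rw [div_le_one hHp]; exact hH1
  have b1 := Psi_diff v N hl hα h1 h2 hH (1 / H) (abs_of_pos hη)
  have b2 := Psi_diff v N hl hα h1 h2 hH (-(1 / H)) (by rw [abs_neg, abs_of_pos hη])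
  set B := 20 * α * √l * N / √H + 40 / (√l * H) with hB
  have hpi := Real.pi_gt_three
  have hlp : 0 < √l := Real.sqrt_pos.2 hl
  have hB0 : 0 ≤ B := by positivity
  have conv : ∀ X : ℝ, |2 * π ^ 2 * X| ≤ 2 * π * B → |X| ≤ B := by
    intro X hX
    rw [abs_mul, abs_of_pos (by positivity)] at hX
    have : π * |X| ≤ B := by
      have : 2 * π * (π * |X|) ≤ 2 * π * B := by linarith
      exact le_of_mul_le_mul_left this (by positivity)
    nlinarith [abs_nonneg X]
  have c1 := abs_le.1 (conv _ b1)
  have c2 := abs_le.1 (conv _ b2)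
  have lo : ∑ n ∈ Finset.range N, (Psi (v n + 1 / H) - Psi (v n)) - N * ((1 / H : ℝ) ^ 2 / 2) ≤
      1 / H * ∑ n ∈ Finset.range N, psi (v n) := by
    have : ∑ n ∈ Finset.range N, (Psi (v n + 1 / H) - Psi (v n) - (1 / H : ℝ) ^ 2 / 2) ≤
      ∑ n ∈ Finset.range N, 1 / H * psi (v n) := Finset.sum_le_sum fun n _ => psi_lower (v n) hη hη1
    rw [Finset.sum_sub_distrib, Finset.sum_const, Finset.card_range, nsmul_eq_mul, ← Finset.mul_sum] at this
    exact this
  have hi : 1 / H * ∑ n ∈ Finset.range N, psi (v n) ≤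
      -∑ n ∈ Finset.range N, (Psi (v n + -(1 / H)) - Psi (v n)) + N * ((1 / H : ℝ) ^ 2 / 2) := by
    have : ∑ n ∈ Finset.range N, 1 / H * psi (v n) ≤
      ∑ n ∈ Finset.range N, (-(Psi (v n + -(1 / H)) - Psi (v n)) + (1 / H : ℝ) ^ 2 / 2) := Finset.sum_le_sum fun n _ => psi_upper (v n) hη hη1
    rw [Finset.sum_add_distrib, Finset.sum_const, Finset.card_range, nsmul_eq_mul, ← Finset.mul_sum, Finset.sum_neg_distrib] at this
    exact this
  have key : |1 / H * ∑ n ∈ Finset.range N, psi (v n)| ≤ B + N * ((1 / H : ℝ) ^ 2 / 2) := by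
    rw [abs_le]; constructor <;> linarith [c1.1, c2.1]
  rw [abs_mul, abs_of_pos hη, one_div, inv_mul_le_iff₀ hHp] at key
  refine key.trans ?_
  have e : (H:ℝ) * (B + N * ((1 / H : ℝ) ^ 2 / 2)) = 20 * α * √l * N * √H + 40 / √l + N / H / 2 := by
    have hs : √(H:ℝ) ^ 2 = H := Real.sq_sqrt hHp.le
    have hs0 : 0 < √(H:ℝ) := Real.sqrt_pos.2 hHp
    rw [hB]
    have e1 : (H:ℝ) * (20 * α * √l * N / √H) = 20 * α * √l * N * √H := by
      nth_rw 1 [← hs]; field_simp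
    have e2 : (H:ℝ) * (40 / (√l * H)) = 40 / √l := by field_simp
    have e3 : (H:ℝ) * (N * ((1 / H : ℝ) ^ 2 / 2)) = N / H / 2 := by field_simp
    rw [mul_add, mul_add, e1, e2, e3]
  rw [← one_div] at *
  have : (0:ℝ) ≤ N / H := by positivity
  linarith

lemma circ_comb (x : ℝ) (hx : 1 ≤ x) (M : ℕ) (hM : 2 * (M:ℝ) ^ 2 ≤ x) (hM' : x < 2 * ((M:ℝ) + 1) ^ 2) :
    (Acount x : ℝ) = ⌊√x⌋₊ + 2 * ∑ a ∈ Finset.range M, (⌊√(x - ((a:ℝ) + 1) ^ 2)⌋₊ : ℝ) - (M:ℝ) ^ 2 := by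
  classical
  have hx0 : 0 ≤ x := by linarith
  set K := ⌊√x⌋₊ with hK
  have leK : ∀ a : ℕ, a ≤ K ↔ (a:ℝ) ^ 2 ≤ x := by
    intro a
    rw [hK, Nat.le_floor_iff (Real.sqrt_nonneg _), Real.le_sqrt (by positivity) hx0]
  have hMK : M ≤ K := by rw [leK]; nlinarith [sq_nonneg (M:ℝ)]
  set T : Finset (ℕ × ℕ) := (Finset.Icc 1 K ×ˢ Finset.range (K+1)).filter (fun p => (p.1:ℝ)^2 + (p.2:ℝ)^2 ≤ x) with hT
  have h1 : Acount x = T.card := by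
    rw [Acount_eq, ← Set.ncard_coe_finset, ← Set.ncard_image_of_injective (f := fun p : ℕ × ℕ => ((p.1:ℤ), (p.2:ℤ)))]
    · congr 1
      ext ⟨a, b⟩
      simp only [Qd, Set.mem_ofPred_eq, Set.mem_image, Finset.mem_coe, hT, Finset.mem_filter, Finset.mem_product, Finset.mem_Icc, Finset.mem_range, Prod.exists, Prod.mk.injEq]
      constructor
      · rintro ⟨⟨ha, hb⟩, h⟩
        lift a to ℕ using ha.le
        lift b to ℕ using hb
        simp only [Int.cast_natCast] at h
        refine ⟨a, b, ⟨⟨⟨by omega, ?_⟩, ?_⟩, h⟩, rfl, rfl⟩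
        · rw [leK]; nlinarith [sq_nonneg (b:ℝ)]
        · rw [Nat.lt_succ_iff, leK]; nlinarith [sq_nonneg (a:ℝ)]
      · rintro ⟨a, b, ⟨⟨⟨ha, _⟩, _⟩, h⟩, rfl, rfl⟩
        refine ⟨⟨by omega, by omega⟩, by simpa using h⟩
    · intro p q h
      simp only [Prod.mk.injEq, Nat.cast_inj] at h
      exact Prod.ext h.1 h.2
  set T0 : Finset (ℕ × ℕ) := (Finset.Icc 1 K ×ˢ {0}) with hT0
  set U : Finset (ℕ × ℕ) := (Finset.Icc 1 M ×ˢ Finset.Icc 1 K).filter (fun p => (p.1:ℝ)^2 + (p.2:ℝ)^2 ≤ x) with hU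
  set V : Finset (ℕ × ℕ) := U.image Prod.swap with hV
  have memV : ∀ a b : ℕ, (a, b) ∈ V ↔ (b, a) ∈ U := by
    intro a b
    simp only [hV, Finset.mem_image, Prod.exists, Prod.swap_prod_mk, Prod.mk.injEq]
    constructor
    · rintro ⟨c, d, h, rfl, rfl⟩; exact h
    · intro h; exact ⟨b, a, h, rfl, rfl⟩
  have memU : ∀ a b : ℕ, (a, b) ∈ U ↔ 1 ≤ a ∧ a ≤ M ∧ 1 ≤ b ∧ (a:ℝ)^2 + (b:ℝ)^2 ≤ x := by
    intro a b
    simp only [hU, Finset.mem_filter, Finset.mem_product, Finset.mem_Icc]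
    constructor
    · rintro ⟨⟨⟨h1, h2⟩, h3, h4⟩, h5⟩; exact ⟨h1, h2, h3, h5⟩
    · rintro ⟨h1, h2, h3, h5⟩
      exact ⟨⟨⟨h1, h2⟩, h3, by rw [leK]; nlinarith [sq_nonneg (a:ℝ)]⟩, h5⟩
  have hTU : T = T0 ∪ (U ∪ V) := by
    ext ⟨a, b⟩
    rw [Finset.mem_union, Finset.mem_union, memV, memU, memU]
    simp only [hT, hT0, Finset.mem_filter, Finset.mem_product, Finset.mem_Icc, Finset.mem_range, Finset.mem_singleton, Nat.lt_succ_iff, leK]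
    constructor
    · rintro ⟨⟨⟨h1, h2⟩, h3⟩, h4⟩
      rcases Nat.eq_zero_or_pos b with hb | hb
      · exact Or.inl ⟨⟨h1, h2⟩, hb⟩
      · right
        by_cases haM : a ≤ M
        · exact Or.inl ⟨h1, haM, hb, h4⟩
        · refine Or.inr ⟨hb, ?_, h1, by linarith⟩
          by_contra hbM
          have e1 : (M:ℝ) + 1 ≤ a := by exact_mod_cast Nat.lt_of_not_le haM
          have e2 : (M:ℝ) + 1 ≤ b := by exact_mod_cast Nat.lt_of_not_le hbM
          have e0 : (0:ℝ) ≤ M := Nat.cast_nonneg _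
          nlinarith
    · rintro (⟨⟨h1, h2⟩, rfl⟩ | ⟨h1, h2, h3, h4⟩ | ⟨h1, h2, h3, h4⟩)
      · simpa [h1, hx0] using h2
      · refine ⟨⟨⟨h1, ?_⟩, ?_⟩, h4⟩ <;> nlinarith [sq_nonneg (a:ℝ), sq_nonneg (b:ℝ)]
      · refine ⟨⟨⟨h3, ?_⟩, ?_⟩, ?_⟩ <;> nlinarith [sq_nonneg (a:ℝ), sq_nonneg (b:ℝ)]
  have hd : Disjoint T0 (U ∪ V) := by
    rw [Finset.disjoint_left]
    rintro ⟨a, b⟩ h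
    rw [Finset.mem_union, memV, memU, memU]
    simp only [hT0, Finset.mem_product, Finset.mem_singleton] at h
    omega
  have hint : U ∩ V = Finset.Icc 1 M ×ˢ Finset.Icc 1 M := by
    ext ⟨a, b⟩
    rw [Finset.mem_inter, memV, memU, memU]
    simp only [Finset.mem_product, Finset.mem_Icc]
    constructor
    · rintro ⟨h1, h2⟩; omega
    · rintro ⟨⟨h1, h2⟩, h3, h4⟩
      have e1 : (a:ℝ) ≤ M := by exact_mod_cast h2
      have e2 : (b:ℝ) ≤ M := by exact_mod_cast h4
      have : (a:ℝ)^2 + (b:ℝ)^2 ≤ x := by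
        nlinarith [Nat.cast_nonneg (α := ℝ) a, Nat.cast_nonneg (α := ℝ) b]
      exact ⟨⟨h1, h2, h3, this⟩, h3, h4, h1, by linarith⟩
  have hVc : V.card = U.card := Finset.card_image_of_injective _ Prod.swap_injective
  have hIcc : Finset.Icc 1 M = Finset.Ico (0 + 1) (M + 1) := by
    ext; simp
  have hUc : U.card = ∑ a ∈ Finset.range M, ⌊√(x - ((a:ℝ) + 1) ^ 2)⌋₊ := by
    rw [hU, Finset.card_filter, Finset.sum_product, Finset.range_eq_Ico, hIcc, ← Finset.sum_Ico_add']
    · refine Finset.sum_congr rfl fun a ha => ?_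
      rw [← Finset.card_filter]
      have ha' : (a:ℝ) + 1 ≤ M := by
        have := (Finset.mem_Ico.1 ha).2
        exact_mod_cast this
      have hn : 0 ≤ x - ((a:ℝ) + 1) ^ 2 := by nlinarith [Nat.cast_nonneg (α := ℝ) a]
      have : (Finset.Icc 1 K).filter (fun y : ℕ => ((a + 1 : ℕ):ℝ)^2 + (y:ℝ)^2 ≤ x) = Finset.Icc 1 ⌊√(x - ((a:ℝ) + 1) ^ 2)⌋₊ := by
        ext b
        rw [Finset.mem_filter, Finset.mem_Icc, Finset.mem_Icc, leK, Nat.le_floor_iff (Real.sqrt_nonneg _), Real.le_sqrt (by positivity) hn]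
        push_cast
        constructor
        · rintro ⟨⟨h1, h2⟩, h3⟩; exact ⟨h1, by linarith⟩
        · rintro ⟨h1, h3⟩; exact ⟨⟨h1, by nlinarith [sq_nonneg ((a:ℝ)+1)]⟩, by linarith⟩
      rw [this]; simp
  have hcard : T.card + M * M = K + 2 * U.card := by
    have e1 := Finset.card_union_add_card_inter U V
    rw [hint, hVc] at e1
    have e2 : T.card = T0.card + (U ∪ V).card := by rw [hTU, Finset.card_union_of_disjoint hd]
    have e3 : T0.card = K := by simp [hT0]
    simp only [Finset.card_product, Nat.card_Icc, Nat.add_sub_cancel] at e1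
    omega
  have : (T.card:ℝ) + M * M = K + 2 * U.card := by exact_mod_cast hcard
  rw [h1]
  rw [hUc] at this
  push_cast at this
  linarith

lemma ff_bd {x R t : ℝ} (hR : 0 < R) (hx : R ^ 2 = x) (ht : 2 * t ^ 2 ≤ x) :
    R ≤ √2 * √(x - t ^ 2) ∧ √(x - t ^ 2) ≤ R ∧ √(x - t ^ 2) ^ 2 = x - t ^ 2 ∧ 0 < √(x - t ^ 2) := by
  have h0 : 0 < x - t ^ 2 := by nlinarith
  refine ⟨?_, ?_, Real.sq_sqrt h0.le, Real.sqrt_pos.2 h0⟩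
  · rw [← Real.sqrt_mul (by norm_num)]
    apply Real.le_sqrt_of_sq_le; linarith
  · rw [Real.sqrt_le_left hR.le]; nlinarith

lemma uv_low {R : ℝ} (u v : ℝ) (hu : 0 < u) (hv : 0 < v) (h1 : R ^ 2 ≤ 2 * u ^ 2) (h2 : R ^ 2 ≤ 2 * v ^ 2) :
    R ^ 2 ≤ 2 * (u * v) := by
  rcases le_total u v with h | h <;> nlinarith

lemma u_low {R : ℝ} (u : ℝ) (hu : 0 < u) (h : R ^ 2 ≤ 2 * u ^ 2) : 7 / 10 * R ≤ u := by
  refine (abs_le_of_sq_le_sq' ?_ hu.le).2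
  nlinarith

lemma sd_alg {R n A B D : ℝ} (hR : 0 < R) (hn : 0 ≤ n) (ht : 2 * (n + 2) ^ 2 ≤ R ^ 2)
    (a2 : A ≤ R) (a3 : A ^ 2 = R ^ 2 - n ^ 2) (a4 : 0 < A)
    (b2 : B ≤ R) (b3 : B ^ 2 = R ^ 2 - (n + 1) ^ 2) (b4 : 0 < B)
    (c2 : D ≤ R) (c3 : D ^ 2 = R ^ 2 - (n + 2) ^ 2) (c4 : 0 < D) :
    1 / (2 * R) ≤ (B - A) - (D - B) ∧ (B - A) - (D - B) ≤ 7 * (1 / (2 * R)) := by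
  have hAB : B - A = -(2 * n + 1) / (A + B) := by
    rw [eq_div_iff (by positivity)]; linarith [show (B - A) * (A + B) = B ^ 2 - A ^ 2 by ring]
  have hBD : D - B = -(2 * n + 3) / (B + D) := by
    rw [eq_div_iff (by positivity)]; linarith [show (D - B) * (B + D) = D ^ 2 - B ^ 2 by ring]
  have hAD : A - D = (4 * n + 4) / (A + D) := by
    rw [eq_div_iff (by positivity)]; linarith [show (A - D) * (A + D) = A ^ 2 - D ^ 2 by ring]
  have e : (B - A) - (D - B) = (2 * (A + B) + (2 * n + 1) * (A - D)) / ((A + B) * (B + D)) := by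
    rw [hAB, hBD]; field_simp; ring
  have hAD0 : 0 ≤ A - D := by rw [hAD]; positivity
  have hA2 : R ^ 2 ≤ 2 * A ^ 2 := by nlinarith
  have hB2 : R ^ 2 ≤ 2 * B ^ 2 := by nlinarith
  have hD2 : R ^ 2 ≤ 2 * D ^ 2 := by nlinarith
  have lowA := u_low A a4 hA2
  have lowB := u_low B b4 hB2
  have lowD := u_low D c4 hD2
  have hup : (2 * n + 1) * (A - D) ≤ 3 * R := by
    rw [hAD, ← mul_div_assoc, div_le_iff₀ (by positivity)]
    have u1 : (2 * n + 1) * (4 * n + 4) ≤ 4 * R ^ 2 := by nlinarith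
    have u2 : 3 * R * (7 / 5 * R) ≤ 3 * R * (A + D) := by
      apply mul_le_mul_of_nonneg_left _ (by positivity); linarith
    linarith [sq_nonneg R, show 3 * R * (7 / 5 * R) = 21 / 5 * R ^ 2 by ring]
  have hden1 : (A + B) * (B + D) ≤ 4 * R ^ 2 := by
    calc (A + B) * (B + D) ≤ (R + R) * (R + R) := by gcongr
      _ = _ := by ring
  have hden3 : 2 * R ^ 2 ≤ (A + B) * (B + D) := by
    have p1 := uv_low A B a4 b4 hA2 hB2
    have p2 := uv_low A D a4 c4 hA2 hD2
    have p3 := uv_low B D b4 c4 hB2 hD2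
    have : (A + B) * (B + D) = A * B + A * D + B ^ 2 + B * D := by ring
    linarith
  rw [e]
  constructor
  · rw [div_le_div_iff₀ (by positivity) (by positivity)]
    have : 0 ≤ (2 * n + 1) * (A - D) := by positivity
    have w : 14 / 5 * R ≤ 2 * (A + B) + (2 * n + 1) * (A - D) := by linarith
    have := mul_le_mul_of_nonneg_right w (show 0 ≤ 2 * R by positivity)
    linarith [sq_nonneg R, show 14 / 5 * R * (2 * R) = 28 / 5 * R ^ 2 by ring]
  · rw [mul_one_div, div_le_div_iff₀ (by positivity) (by positivity)]
    have w : 2 * (A + B) + (2 * n + 1) * (A - D) ≤ 7 * R := by linarith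
    have := mul_le_mul_of_nonneg_right w (show 0 ≤ 2 * R by positivity)
    linarith [sq_nonneg R, show 7 * R * (2 * R) = 14 * R ^ 2 by ring]

lemma ff_second {x R n : ℝ} (hR : 0 < R) (hx : R ^ 2 = x) (hn : 0 ≤ n) (ht : 2 * (n + 2) ^ 2 ≤ x) :
    1 / (2 * R) ≤ (√(x - (n+1)^2) - √(x - n^2)) - (√(x - (n+2)^2) - √(x - (n+1)^2)) ∧
    (√(x - (n+1)^2) - √(x - n^2)) - (√(x - (n+2)^2) - √(x - (n+1)^2)) ≤ 7 * (1 / (2 * R)) := by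
  obtain ⟨a1, a2, a3, a4⟩ := ff_bd hR hx (t := n) (by nlinarith)
  obtain ⟨b1, b2, b3, b4⟩ := ff_bd hR hx (t := n+1) (by nlinarith)
  obtain ⟨c1, c2, c3, c4⟩ := ff_bd hR hx (t := n+2) ht
  subst hx
  exact sd_alg hR hn ht a2 a3 a4 b2 b3 b4 c2 c3 c4

lemma psi_abs (t : ℝ) : |psi t| ≤ 1 / 2 := by
  unfold psi
  rw [abs_le]; constructor <;> linarith [Int.fract_nonneg t, Int.fract_lt_one t]

lemma psi_circ {x q : ℝ} (hq : 1 ≤ q) (hx : q ^ 6 = x) (M : ℕ) (hM : 2 * (M:ℝ) ^ 2 ≤ x) :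
    |∑ a ∈ Finset.range M, psi (√(x - ((a:ℝ) + 1) ^ 2))| ≤ 222 * q ^ 2 := by
  have hq0 : 0 < q := by linarith
  have hq2 : 1 ≤ q ^ 2 := one_le_pow₀ hq
  have hR : 0 < q ^ 3 := by positivity
  have hxR : (q ^ 3) ^ 2 = x := by rw [← hx]; ring
  rcases Nat.eq_zero_or_pos M with rfl | hMp
  · simp; positivity
  obtain ⟨N, rfl⟩ : ∃ N, M = N + 1 := ⟨M - 1, by omega⟩
  rw [Finset.sum_range_succ]
  push_cast at hM
  have hNR : (N:ℝ) ≤ q ^ 3 := by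
    have : (0:ℝ) ≤ N := Nat.cast_nonneg _
    nlinarith
  have hH : 1 ≤ ⌈q⌉₊ := Nat.one_le_ceil_iff.2 hq0
  have hHq : q ≤ ⌈q⌉₊ := Nat.le_ceil q
  have hHq2 : (⌈q⌉₊:ℝ) ≤ 2 * q := by linarith [Nat.ceil_lt_add_one hq0.le]
  have key := psi_sum (fun a : ℕ => √(x - ((a:ℝ) + 1) ^ 2)) N (l := 1 / (2 * q ^ 3)) (α := 7) (by positivity) (by norm_num)
    (fun n hn => by
      have hn' : (n:ℝ) + 1 + 1 ≤ N := by exact_mod_cast hn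
      have hn0 : (0:ℝ) ≤ n := Nat.cast_nonneg _
      have := (ff_second hR hxR (n := (n:ℝ) + 1) (by positivity) (by nlinarith)).1
      push_cast
      convert! this using 5 <;> ring_nf)
    (fun n hn => by
      have hn' : (n:ℝ) + 1 + 1 ≤ N := by exact_mod_cast hn
      have hn0 : (0:ℝ) ≤ n := Nat.cast_nonneg _
      have := (ff_second hR hxR (n := (n:ℝ) + 1) (by positivity) (by nlinarith)).2
      push_cast
      convert! this using 5 <;> ring_nf)
    hH
  have t1 : 20 * 7 * √(1 / (2 * q ^ 3)) * N * √(⌈q⌉₊:ℝ) ≤ 140 * q ^ 2 := by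
    have : √(1 / (2 * q ^ 3)) * √(⌈q⌉₊:ℝ) ≤ 1 / q := by
      rw [← Real.sqrt_mul (by positivity), Real.sqrt_le_left (by positivity), div_mul_eq_mul_div, one_mul,
        div_pow, div_le_div_iff₀ (by positivity) (by positivity)]
      nlinarith
    calc _ = 140 * N * (√(1 / (2 * q ^ 3)) * √(⌈q⌉₊:ℝ)) := by ring
      _ ≤ 140 * q ^ 3 * (1 / q) := by gcongr
      _ = _ := by field_simp
  have t2 : 40 / √(1 / (2 * q ^ 3)) ≤ 80 * q ^ 2 := by
    rw [Real.sqrt_div (by norm_num), Real.sqrt_one, div_div_eq_mul_div, div_one]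
    have : √(2 * q ^ 3) ≤ 2 * q ^ 2 := by
      rw [Real.sqrt_le_left (by positivity)]
      have : q ^ 3 ≤ q ^ 4 := pow_le_pow_right₀ hq (by norm_num)
      nlinarith
    linarith
  have t3 : (N:ℝ) / ⌈q⌉₊ ≤ q ^ 2 := by
    rw [div_le_iff₀ (by linarith)]
    nlinarith
  refine (abs_add_le _ _).trans ?_
  have := psi_abs (√(x - ((N:ℝ) + 1) ^ 2))
  linarith

noncomputable def FF (R t : ℝ) : ℝ := (t * √(R ^ 2 - t ^ 2) + R ^ 2 * Real.arcsin (t / R)) / 2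

lemma f_deriv {R t : ℝ} (hR : 0 < R) (ht : 2 * t ^ 2 ≤ R ^ 2) :
    HasDerivAt (fun t => √(R ^ 2 - t ^ 2)) (-t / √(R ^ 2 - t ^ 2)) t := by
  have h0 : 0 < R ^ 2 - t ^ 2 := by nlinarith
  have := ((hasDerivAt_pow 2 t).const_sub (R ^ 2)).sqrt h0.ne'
  convert! this using 1
  have := Real.sqrt_pos.2 h0
  field_simp
  simp [mul_comm]

lemma FF_deriv {R t : ℝ} (hR : 0 < R) (ht : 2 * t ^ 2 ≤ R ^ 2) :
    HasDerivAt (FF R) (√(R ^ 2 - t ^ 2)) t := by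
  have h0 : 0 < R ^ 2 - t ^ 2 := by nlinarith
  have hs := Real.sqrt_pos.2 h0
  have hs2 := Real.sq_sqrt h0.le
  have hlt : t ^ 2 < R ^ 2 := by linarith
  have hab := abs_lt_of_sq_lt_sq' hlt hR.le
  have e : √(1 - (t / R) ^ 2) = √(R ^ 2 - t ^ 2) / R := by
    rw [show 1 - (t / R) ^ 2 = (R ^ 2 - t ^ 2) / R ^ 2 by field_simp, Real.sqrt_div h0.le, Real.sqrt_sq hR.le]
  have h1 : HasDerivAt (fun t => Real.arcsin (t / R)) (1 / √(1 - (t / R) ^ 2) * (1 / R)) t := by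
    refine HasDerivAt.comp t (Real.hasDerivAt_arcsin ?_ ?_) ((hasDerivAt_id t).div_const R)
    · have : -1 < t / R := by rw [lt_div_iff₀ hR]; linarith [hab.1]
      exact this.ne'
    · have : t / R < 1 := by rw [div_lt_iff₀ hR]; linarith [hab.2]
      exact this.ne
  have := ((((hasDerivAt_id t).mul (f_deriv hR ht)).add (h1.const_mul (R ^ 2))).div_const 2)
  convert! this using 1
  rw [e]
  simp only [id]
  set s := √(R ^ 2 - t ^ 2)
  field_simp
  linarith

lemma trap_alg {R a t u v : ℝ} (hR : 0 < R) (ha : 0 ≤ a) (hat : a ≤ t) (hta : t ≤ a + 1) (ht : 2 * t ^ 2 ≤ R ^ 2)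
    (hu : 0 < u) (hv : 0 < v) (hu2 : u ^ 2 = R ^ 2 - a ^ 2) (hv2 : v ^ 2 = R ^ 2 - t ^ 2) (huR : u ≤ R) :
    |(v - u - (t - a) * (-t / v)) / 2| ≤ 1 / R := by
  have hat2 : a ^ 2 ≤ t ^ 2 := by gcongr
  have hu3 : R ^ 2 ≤ 2 * u ^ 2 := by linarith
  have hv3 : R ^ 2 ≤ 2 * v ^ 2 := by linarith
  have huv := uv_low u v hu hv hu3 hv3
  have huv' : u - v = (t - a) * ((t + a) / (u + v)) := by
    have : u + v ≠ 0 := by positivity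
    field_simp; linarith [show (u - v) * (u + v) = u ^ 2 - v ^ 2 by ring]
  have hle : (t + a) / (u + v) ≤ 1 := by
    rw [div_le_one (by positivity)]
    have h1 : t ≤ u := (abs_le_of_sq_le_sq' (by linarith) hu.le).2
    have h2 : a ≤ v := (abs_le_of_sq_le_sq' (by linarith) hv.le).2
    linarith
  have hge : 0 ≤ (t + a) / (u + v) := by
    have : 0 ≤ t := by linarith
    positivity
  have haR : a ≤ R := (abs_le_of_sq_le_sq' (by nlinarith) hR.le).2
  have hta0 : 0 ≤ t - a := by linarith
  have d1 : 0 ≤ u - v := by rw [huv']; positivity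
  have d2 : u - v ≤ t - a := by rw [huv']; exact mul_le_of_le_one_right hta0 hle
  have e : (v - u - (t - a) * (-t / v)) / 2 = (t - a) / 2 * (((t - a) * u + a * (u - v)) / (v * (u + v))) := by
    have h3 : v - u = - ((t - a) * ((t + a) / (u + v))) := by rw [← huv']; ring
    rw [h3]
    have : u + v ≠ 0 := by positivity
    field_simp
    ring
  have hden : R ^ 2 ≤ v * (u + v) := by nlinarith
  have hnum : (t - a) * u + a * (u - v) ≤ 2 * R := by
    have : (t - a) * u ≤ 1 * R := by apply mul_le_mul <;> linarith
    have : a * (u - v) ≤ R * 1 := by apply mul_le_mul <;> linarith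
    linarith
  have hn0 : 0 ≤ (t - a) * u + a * (u - v) := by positivity
  rw [e, abs_of_nonneg (by positivity)]
  calc (t - a) / 2 * (((t - a) * u + a * (u - v)) / (v * (u + v)))
      ≤ 1 / 2 * (2 * R / R ^ 2) := by
        apply mul_le_mul (by linarith) _ (by positivity) (by norm_num)
        apply div_le_div₀ (by positivity) hnum (by positivity) hden
    _ = 1 / R := by field_simp

lemma trap {R a : ℝ} (hR : 0 < R) (ha : 0 ≤ a) (ht : 2 * (a + 1) ^ 2 ≤ R ^ 2) :
    |FF R (a + 1) - FF R a - (√(R ^ 2 - a ^ 2) + √(R ^ 2 - (a + 1) ^ 2)) / 2| ≤ 1 / R := by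
  set u := √(R ^ 2 - a ^ 2) with hu
  have hb : ∀ t ∈ Set.Icc a (a + 1), 2 * t ^ 2 ≤ R ^ 2 := by
    intro t ht'
    have : t ^ 2 ≤ (a + 1) ^ 2 := by
      have := ht'.1; have := ht'.2
      gcongr
      linarith
    linarith
  have key := (convex_Icc a (a + 1)).norm_image_sub_le_of_norm_hasDerivWithin_le (𝕜 := ℝ)
    (f := fun t => FF R t - FF R a - (t - a) * (u + √(R ^ 2 - t ^ 2)) / 2)
    (f' := fun t => (√(R ^ 2 - t ^ 2) - u - (t - a) * (-t / √(R ^ 2 - t ^ 2))) / 2) (C := 1 / R)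
    (x := a) (y := a + 1)
    (fun t ht' => by
      have h1 := (FF_deriv hR (hb t ht')).sub_const (FF R a)
      have h2 := (((hasDerivAt_id t).sub_const a).mul ((f_deriv hR (hb t ht')).const_add u)).div_const 2
      have := (h1.sub h2).hasDerivWithinAt (s := Set.Icc a (a + 1))
      convert! this using 1
      simp only [id]
      ring)
    (fun t ht' => by
      rw [Real.norm_eq_abs]
      obtain ⟨_, a2, a3, a4⟩ := ff_bd hR rfl (hb a ⟨le_rfl, by linarith⟩)
      obtain ⟨_, b2, b3, b4⟩ := ff_bd hR rfl (hb t ht')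
      exact trap_alg hR ha ht'.1 ht'.2 (hb t ht') a4 b4 a3 b3 a2)
    ⟨le_rfl, by linarith⟩ ⟨by linarith, le_rfl⟩
  rw [Real.norm_eq_abs, Real.norm_eq_abs] at key
  have e1 : |a + 1 - a| = 1 := by simp
  rw [e1, mul_one] at key
  refine le_trans (le_of_eq ?_) key
  congr 1; ring

lemma trap_sum {R : ℝ} (hR : 0 < R) (M : ℕ) (hM : 2 * (M:ℝ) ^ 2 ≤ R ^ 2) :
    |∑ a ∈ Finset.range M, √(R ^ 2 - ((a:ℝ) + 1) ^ 2) - (FF R M - R / 2 + √(R ^ 2 - (M:ℝ) ^ 2) / 2)| ≤ M * (1 / R) := by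
  induction M with
  | zero =>
    simp [FF, Real.sqrt_sq hR.le]
  | succ M ih =>
    push_cast at hM ⊢
    have h0 : (0:ℝ) ≤ M := Nat.cast_nonneg _
    have ih' := ih (by nlinarith)
    have t := trap hR h0 hM
    rw [Finset.sum_range_succ]
    rw [abs_le] at *
    constructor <;> linarith [t.1, t.2, ih'.1, ih'.2]

lemma FF_end {R m : ℝ} (hR : 0 < R) (hm : m = R / √2) : FF R m = m ^ 2 / 2 + π * R ^ 2 / 8 := by
  have hs2 : √(2:ℝ) ^ 2 = 2 := Real.sq_sqrt (by norm_num)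
  have hs0 : 0 < √(2:ℝ) := by positivity
  have hm0 : 0 < m := by rw [hm]; positivity
  have hmR : 2 * m ^ 2 = R ^ 2 := by rw [hm, div_pow, hs2]; ring
  have e1 : √(R ^ 2 - m ^ 2) = m := by
    rw [show R ^ 2 - m ^ 2 = m ^ 2 by linarith, Real.sqrt_sq hm0.le]
  have e2 : Real.arcsin (m / R) = π / 4 := by
    have : m / R = Real.sin (π / 4) := by
      rw [Real.sin_pi_div_four, hm]
      field_simp
      linarith
    rw [this, Real.arcsin_sin] <;> linarith [Real.pi_pos]
  rw [FF, e1, e2]; ring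

lemma FF_last {R m M : ℝ} (hR : 0 < R) (hm0 : 0 < m) (hmR : 2 * m ^ 2 = R ^ 2) (hM0 : 0 ≤ M) (hMm : M ≤ m) (hM1 : m ≤ M + 1) :
    |FF R m - FF R M - (m - M) * m| ≤ 1 ∧ m ≤ √(R ^ 2 - M ^ 2) ∧ √(R ^ 2 - M ^ 2) ≤ m + 1 := by
  have hb : ∀ t ∈ Set.Icc M m, 2 * t ^ 2 ≤ R ^ 2 := by
    intro t ht'
    have : t ^ 2 ≤ m ^ 2 := by
      have := ht'.1; have := ht'.2
      gcongr
      linarith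
    linarith
  have lo : ∀ t ∈ Set.Icc M m, m ≤ √(R ^ 2 - t ^ 2) := by
    intro t ht
    apply Real.le_sqrt_of_sq_le
    linarith [hb t ht]
  have hi : ∀ t ∈ Set.Icc M m, √(R ^ 2 - t ^ 2) ≤ m + 1 := by
    intro t ht
    rw [Real.sqrt_le_left (by positivity)]
    have := ht.1
    nlinarith
  refine ⟨?_, lo M ⟨le_rfl, hMm⟩, hi M ⟨le_rfl, hMm⟩⟩
  have key := (convex_Icc M m).norm_image_sub_le_of_norm_hasDerivWithin_le (𝕜 := ℝ)
    (f := fun t => FF R t - t * m) (f' := fun t => √(R ^ 2 - t ^ 2) - m) (C := 1)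
    (x := M) (y := m)
    (fun t ht' => by
      have h1 := (FF_deriv hR (hb t ht')).sub ((hasDerivAt_id t).mul_const m)
      have := h1.hasDerivWithinAt (s := Set.Icc M m)
      convert! this using 1
      simp)
    (fun t ht' => by
      rw [Real.norm_eq_abs, abs_le]
      constructor <;> linarith [lo t ht', hi t ht'])
    ⟨le_rfl, hMm⟩ ⟨hMm, le_rfl⟩
  rw [Real.norm_eq_abs, Real.norm_eq_abs, abs_of_nonneg (show 0 ≤ m - M by linarith)] at key
  refine le_trans (le_of_eq ?_) (key.trans (by linarith))
  congr 1; ring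

lemma circle : ∃ C : ℝ, 0 < C ∧ ∀ y : ℝ, 1 ≤ y → |(Acount y : ℝ) - π / 4 * y| ≤ C * y ^ ((1:ℝ) / 3) := by
  refine ⟨500, by norm_num, fun y hy => ?_⟩
  obtain ⟨q, hq, rfl⟩ : ∃ q : ℝ, 1 ≤ q ∧ q ^ 6 = y := by
    refine ⟨y ^ ((1:ℝ) / 6), Real.one_le_rpow hy (by norm_num), ?_⟩
    rw [← Real.rpow_natCast, ← Real.rpow_mul (by linarith)]
    norm_num
  have hq0 : 0 < q := by linarith
  have hq2 : 1 ≤ q ^ 2 := one_le_pow₀ hq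
  have e3 : (q ^ 6) ^ ((1:ℝ) / 3) = q ^ 2 := by
    rw [← Real.rpow_natCast, ← Real.rpow_mul hq0.le, ← Real.rpow_natCast]
    norm_num
  rw [e3]
  set R := q ^ 3 with hRdef
  have hR : 0 < R := by positivity
  have hR1 : 1 ≤ R := one_le_pow₀ hq
  have hqR : q ^ 6 = R ^ 2 := by rw [hRdef]; ring
  set m := R / √2 with hm
  have hs2 : √(2:ℝ) ^ 2 = 2 := Real.sq_sqrt (by norm_num)
  have hs0 : 0 < √(2:ℝ) := by positivity
  have hm0 : 0 < m := by positivity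
  have hmR : 2 * m ^ 2 = R ^ 2 := by rw [hm, div_pow, hs2]; ring
  set M := ⌊m⌋₊ with hM
  have hMm : (M:ℝ) ≤ m := Nat.floor_le hm0.le
  have hM1 : m < (M:ℝ) + 1 := Nat.lt_floor_add_one m
  have hM0 : (0:ℝ) ≤ M := Nat.cast_nonneg _
  have b1 : 2 * (M:ℝ) ^ 2 ≤ R ^ 2 := by nlinarith
  have b2 : R ^ 2 < 2 * ((M:ℝ) + 1) ^ 2 := by nlinarith
  have comb := circ_comb (q ^ 6) hy M (by rw [hqR]; exact b1) (by rw [hqR]; exact b2)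
  have ps := psi_circ hq rfl M (by rw [hqR]; exact b1)
  rw [hqR] at comb ps ⊢
  have ts := trap_sum hR M b1
  have fe := FF_end hR hm
  obtain ⟨fl, f1, f2⟩ := FF_last hR hm0 hmR hM0 hMm hM1.le
  rw [Real.sqrt_sq hR.le] at comb
  have k1 : (⌊R⌋₊:ℝ) ≤ R := Nat.floor_le hR.le
  have k2 : R < (⌊R⌋₊:ℝ) + 1 := Nat.lt_floor_add_one R
  have hMR : (M:ℝ) * (1 / R) ≤ 1 := by
    rw [mul_one_div, div_le_one hR]; nlinarith
  have hsum : ∑ a ∈ Finset.range M, (⌊√(R ^ 2 - ((a:ℝ) + 1) ^ 2)⌋₊ : ℝ) =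
      ∑ a ∈ Finset.range M, √(R ^ 2 - ((a:ℝ) + 1) ^ 2) - ∑ a ∈ Finset.range M, psi (√(R ^ 2 - ((a:ℝ) + 1) ^ 2)) - M / 2 := by
    have : (M:ℝ) / 2 = ∑ a ∈ Finset.range M, (1 / 2 : ℝ) := by simp; ring
    rw [this, ← Finset.sum_sub_distrib, ← Finset.sum_sub_distrib]
    refine Finset.sum_congr rfl fun a _ => ?_
    rw [psi, natCast_floor_eq_intCast_floor (Real.sqrt_nonneg _), ← Int.self_sub_fract]
    ring
  rw [hsum] at comb
  set S1 := ∑ a ∈ Finset.range M, √(R ^ 2 - ((a:ℝ) + 1) ^ 2)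
  set S2 := ∑ a ∈ Finset.range M, psi (√(R ^ 2 - ((a:ℝ) + 1) ^ 2))
  set fM := √(R ^ 2 - (M:ℝ) ^ 2)
  rw [comb]
  rw [fe] at fl
  have hsq : 0 ≤ (m - M) ^ 2 ∧ (m - M) ^ 2 ≤ 1 := ⟨sq_nonneg _, by nlinarith⟩
  have hid : (m - M) * m = m ^ 2 - m * M := by ring
  have hid2 : (m - M) ^ 2 = m ^ 2 - 2 * (m * M) + (M:ℝ) ^ 2 := by ring
  rw [hid2] at hsq
  rw [hid] at fl
  rw [abs_le] at *
  constructor <;> linarith [ts.1, ts.2, fl.1, fl.2, ps.1, ps.2, hsq.1, hsq.2]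

lemma Acount_zero {t : ℝ} (ht : t < 1) : Acount t = 0 := by
  have : idealsLe t = ∅ := by
    ext I
    simp only [idealsLe, Set.mem_ofPred_eq, Set.mem_empty_iff_false, iff_false, not_and, not_le]
    intro h
    have : (1:ℝ) ≤ normI I := by exact_mod_cast normI_pos h
    linarith
  simp [Acount, this]

lemma Acount_one {t : ℝ} (ht : 1 ≤ t) : (1:ℝ) ≤ Acount t := by
  have : 0 < Acount t := by
    rw [Acount, Set.ncard_pos (idealsLe_finite t)]
    refine ⟨⊤, top_ne_bot, ?_⟩
    rw [normI_eq_one.2 rfl]; simpa using ht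
  exact_mod_cast this

lemma Asq : ∃ C : ℝ, 0 < C ∧ ∀ t : ℝ, 0 < t → |(Acount t : ℝ) ^ 2 - (π / 4) ^ 2 * t ^ 2| ≤ C * t ^ ((4:ℝ) / 3) := by
  obtain ⟨C, hC, h⟩ := circle
  have hpi : π / 4 < 1 := by linarith [Real.pi_lt_four]
  have hpi0 : 0 < π / 4 := by positivity
  refine ⟨1 + C * (2 + C), by positivity, fun t ht => ?_⟩
  have hp : 0 < t ^ ((4:ℝ) / 3) := Real.rpow_pos_of_pos ht _
  rcases lt_or_ge t 1 with h1 | h1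
  · rw [Acount_zero h1]
    have e : t ^ 2 ≤ t ^ ((4:ℝ) / 3) := by
      rw [← Real.rpow_natCast]
      exact Real.rpow_le_rpow_of_exponent_ge ht h1.le (by norm_num)
    have : (π / 4) ^ 2 * t ^ 2 ≤ 1 * t ^ 2 := by
      apply mul_le_mul_of_nonneg_right _ (sq_nonneg _)
      exact pow_le_one₀ hpi0.le hpi.le
    have e0 : 0 ≤ (π / 4) ^ 2 * t ^ 2 := by positivity
    rw [show ((0:ℕ):ℝ) ^ 2 - (π / 4) ^ 2 * t ^ 2 = -((π / 4) ^ 2 * t ^ 2) by simp, abs_neg, abs_of_nonneg e0]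
    have : 0 < C * (2 + C) * t ^ ((4:ℝ) / 3) := by positivity
    linarith
  · have h2 := h t h1
    have e13 : t ^ ((1:ℝ) / 3) ≤ t := by
      conv_rhs => rw [← Real.rpow_one t]
      exact Real.rpow_le_rpow_of_exponent_le h1 (by norm_num)
    have e43 : t ^ ((1:ℝ) / 3) * t = t ^ ((4:ℝ) / 3) := by
      conv_lhs => rw [← Real.rpow_one t, ← Real.rpow_mul ht.le, ← Real.rpow_add ht]
      norm_num
    have hp3 : 0 < t ^ ((1:ℝ) / 3) := Real.rpow_pos_of_pos ht _
    have h3 : |(Acount t : ℝ) + π / 4 * t| ≤ (2 + C) * t := by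
      have u1 : π / 4 * t ≤ t := by nlinarith
      have u2 : C * t ^ ((1:ℝ) / 3) ≤ C * t := by gcongr
      rw [abs_of_nonneg (by positivity)]
      have := (abs_le.1 h2).2
      linarith
    have e : (Acount t : ℝ) ^ 2 - (π / 4) ^ 2 * t ^ 2 = ((Acount t : ℝ) - π / 4 * t) * ((Acount t : ℝ) + π / 4 * t) := by ring
    rw [e, abs_mul]
    calc _ ≤ (C * t ^ ((1:ℝ) / 3)) * ((2 + C) * t) := by gcongr
      _ = C * (2 + C) * (t ^ ((1:ℝ) / 3) * t) := by ring
      _ ≤ _ := by rw [e43]; linarith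

lemma Bbd : ∃ C : ℝ, 0 < C ∧ ∀ y : ℝ, 0 < y →
    |((coprimePairs y).ncard : ℝ) - (π / 4) ^ 2 * y ^ 2 * (1 / zetaQi2)| ≤ C * y ^ ((4:ℝ) / 3) := by
  obtain ⟨C, hC, h⟩ := Asq
  have hs := summable_DD (s := 4 / 3) (by norm_num)
  have hnn : 0 ≤ ∑' S : Finset PrI, (normI (DD S) : ℝ) ^ (-(4 / 3 : ℝ)) :=
    tsum_nonneg fun S => by positivity
  refine ⟨C * ∑' S : Finset PrI, (normI (DD S) : ℝ) ^ (-(4 / 3 : ℝ)) + 1, by positivity, fun y hy => ?_⟩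
  have h1 := (Bcount_hasSum y).sub (mobius_zeta.mul_left ((π / 4) ^ 2 * y ^ 2))
  have h2 := hs.hasSum.mul_left (C * y ^ ((4:ℝ) / 3))
  have := h1.norm_le_of_bounded h2 (fun S => by
    have hN : (0:ℝ) < normI (DD S) := by exact_mod_cast normI_pos (DD_ne S)
    have h3 := h (y / normI (DD S)) (by positivity)
    have e : (-1:ℝ) ^ S.card * (Acount (y / normI (DD S)) : ℝ) ^ 2 - (π / 4) ^ 2 * y ^ 2 * ((-1:ℝ) ^ S.card * (1 / (normI (DD S) : ℝ) ^ 2))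
      = (-1:ℝ) ^ S.card * ((Acount (y / normI (DD S)) : ℝ) ^ 2 - (π / 4) ^ 2 * (y / normI (DD S)) ^ 2) := by
      rw [div_pow]; ring
    rw [e, norm_mul, norm_pow, norm_neg, norm_one, one_pow, one_mul, Real.norm_eq_abs]
    refine h3.trans (le_of_eq ?_)
    rw [Real.div_rpow hy.le hN.le, Real.rpow_neg hN.le]; ring)
  rw [Real.norm_eq_abs] at this
  refine this.trans ?_
  have : 0 < y ^ ((4:ℝ) / 3) := by positivity
  linarith

lemma Alow : ∃ c : ℝ, 0 < c ∧ ∀ x : ℝ, 1 ≤ x → c * x ≤ Acount x := by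
  obtain ⟨C, hC, h⟩ := circle
  have hpi0 : 0 < π / 8 := by positivity
  set X := (C / (π / 8)) ^ ((3:ℝ) / 2) with hX
  have hX0 : 0 < X := by positivity
  refine ⟨min (1 / X) (π / 8), by positivity, fun x hx => ?_⟩
  have hx0 : 0 < x := by linarith
  rcases le_total x X with h1 | h1
  · calc _ ≤ 1 / X * x := by gcongr; exact min_le_left _ _
      _ ≤ 1 := by rw [one_div, inv_mul_le_iff₀ hX0]; linarith
      _ ≤ _ := Acount_one hx
  · have h2 := (abs_le.1 (h x hx)).1
    have h3 : C / (π / 8) ≤ x ^ ((2:ℝ) / 3) := by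
      have := Real.rpow_le_rpow hX0.le h1 (show (0:ℝ) ≤ 2 / 3 by norm_num)
      rw [hX, ← Real.rpow_mul (by positivity)] at this
      norm_num at this ⊢
      exact this
    rw [div_le_iff₀ hpi0] at h3
    have e : x ^ ((2:ℝ) / 3) * x ^ ((1:ℝ) / 3) = x := by
      rw [← Real.rpow_add hx0]; norm_num
    have h4 : C * x ^ ((1:ℝ) / 3) ≤ π / 8 * x := by
      calc _ ≤ (x ^ ((2:ℝ) / 3) * (π / 8)) * x ^ ((1:ℝ) / 3) := by gcongr
        _ = π / 8 * (x ^ ((2:ℝ) / 3) * x ^ ((1:ℝ) / 3)) := by ring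
        _ = _ := by rw [e]
    have : min (1 / X) (π / 8) * x ≤ π / 8 * x := by gcongr; exact min_le_right _ _
    linarith

theorem gcdNormProbability_asymptotic :
    ∃ C : ℝ, 0 < C ∧ ∀ x : ℝ, 1 ≤ x → ∀ k : ℕ, 1 ≤ k → (k : ℝ) ≤ x →
      |({p ∈ P x | normI (p.1 ⊔ p.2) = k}.ncard : ℝ) / ((P x).ncard : ℝ) -
          (r k : ℝ) / (4 * zetaQi2 * (k : ℝ) ^ 2)|
        ≤ C * (r k : ℝ) / (x ^ ((2 : ℝ) / 3) * (k : ℝ) ^ ((4 : ℝ) / 3)) := by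
  obtain ⟨C1, hC1, hA⟩ := Asq
  obtain ⟨C2, hC2, hB⟩ := Bbd
  obtain ⟨c, hc, hlow⟩ := Alow
  have hz := zeta_pos
  refine ⟨(C2 + C1 / zetaQi2) / c ^ 2, by positivity, fun x hx k hk hkx => ?_⟩
  have hx0 : 0 < x := by linarith
  have hk1 : (1:ℝ) ≤ k := by exact_mod_cast hk
  have hk0 : (0:ℝ) < k := by linarith
  rw [gcd_count x hk, P_ncard, r_eq hk]
  have hA' := hA x hx0
  have hB' := hB (x / k) (by positivity)
  have hl := hlow x hx
  set n : ℝ := ((idealsNorm k).ncard : ℝ) with hn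
  set B : ℝ := ((coprimePairs (x / k)).ncard : ℝ) with hBdef
  set A : ℝ := (Acount x : ℝ) with hAdef
  have hn0 : 0 ≤ n := Nat.cast_nonneg _
  have hA0 : 0 < A := lt_of_lt_of_le (by positivity) hl
  push_cast
  rw [← hn, ← hBdef, ← hAdef]
  set p := x ^ ((4:ℝ) / 3) with hp
  set q := (k:ℝ) ^ ((4:ℝ) / 3) with hq
  set s := x ^ ((2:ℝ) / 3) with hs
  have hp0 : 0 < p := by positivity
  have hq0 : 0 < q := by positivity
  have hs0 : 0 < s := by positivity
  have hps : x ^ 2 = p * s := by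
    rw [hp, hs, ← Real.rpow_add hx0, ← Real.rpow_natCast]; norm_num
  have hqk : q ≤ (k:ℝ) ^ 2 := by
    rw [hq, ← Real.rpow_natCast]
    exact Real.rpow_le_rpow_of_exponent_le hk1 (by norm_num)
  rw [Real.div_rpow hx0.le hk0.le] at hB'
  have e : n * B / A ^ 2 - 4 * n / (4 * zetaQi2 * (k:ℝ) ^ 2) =
      n * (((B - (π / 4) ^ 2 * (x / k) ^ 2 * (1 / zetaQi2)) - (A ^ 2 - (π / 4) ^ 2 * x ^ 2) / (zetaQi2 * (k:ℝ) ^ 2)) / A ^ 2) := by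
    field_simp
    ring
  have h2 : |(A ^ 2 - (π / 4) ^ 2 * x ^ 2) / (zetaQi2 * (k:ℝ) ^ 2)| ≤ C1 / zetaQi2 * (p / q) := by
    rw [abs_div, abs_of_pos (show 0 < zetaQi2 * (k:ℝ) ^ 2 by positivity)]
    calc _ ≤ C1 * p / (zetaQi2 * q) := by gcongr
      _ = _ := by field_simp
  have h3 : |(B - (π / 4) ^ 2 * (x / k) ^ 2 * (1 / zetaQi2)) - (A ^ 2 - (π / 4) ^ 2 * x ^ 2) / (zetaQi2 * (k:ℝ) ^ 2)|
      ≤ (C2 + C1 / zetaQi2) * (p / q) := by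
    refine (abs_sub _ _).trans ?_
    linarith
  have hA2 : c ^ 2 * x ^ 2 ≤ A ^ 2 := by
    rw [← mul_pow]; gcongr
  rw [e, abs_mul, abs_of_nonneg hn0, abs_div, abs_of_pos (show 0 < A ^ 2 by positivity)]
  calc _ ≤ n * ((C2 + C1 / zetaQi2) * (p / q) / (c ^ 2 * x ^ 2)) := by gcongr
    _ = (C2 + C1 / zetaQi2) / c ^ 2 * n / (s * q) := by
      rw [hps]; field_simp
    _ ≤ (C2 + C1 / zetaQi2) / c ^ 2 * (4 * n) / (s * q) := by
      gcongr; linarith
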